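/- arXiv:1903.01622 — 4 statements merged into one kernel-verified Lean document; each statement's English description precedes it below -/
import Mathlib

section
/- Let k ≥ d ≥ 3 be integers and let n ≥ 3k^5. If F is a (d, 2k+d−3)-conditionally intersecting family of k-element subsets of [n], then |F| ≤ binomial(n−1, k−1). -/
/-- A family `F` of finsets is `(d, s)`-conditionally intersecting if there do not exist
`d` distinct members of `F` whose union has size at most `s` and whose intersection is empty. -/
def CondIntersecting {n : ℕ} (d s : ℕ) (F : Finset (Finset (Fin n))) : Prop :=
  ¬ ∃ D ⊆ F, D.card = d ∧ (D.sup id).card ≤ s ∧ D.inf id = ∅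

open Finset in
/-- `A` is bad: every `(k-1)`-subset of `A` lies in another member of `F`. -/
def BadSet {n : ℕ} (F : Finset (Finset (Fin n))) (A : Finset (Fin n)) : Prop :=
  ∀ x ∈ A, ∃ y, y ∉ A ∧ insert y (A.erase x) ∈ F

open Finset in
lemma key_case1 {n k d : ℕ} (hd : 3 ≤ d) (hdk : d ≤ k)
    (F : Finset (Finset (Fin n))) (hunif : ∀ S ∈ F, S.card = k)
    (hci : CondIntersecting d (2 * k + d - 3) F)
    (A : Finset (Fin n)) (hA : A ∈ F) (y : Fin n → Fin n)
    (hy : ∀ x ∈ A, y x ∉ A ∧ insert (y x) (A.erase x) ∈ F)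
    (C : Finset (Fin n)) (hC : C ∈ F) (h1 : 1 ≤ (C ∩ A).card) (h2 : (C ∩ A).card ≤ d - 2) :
    False := by
  classical
  have hAk := hunif A hA
  have hCk := hunif C hC
  obtain ⟨J, hIJ, hJA, hJ⟩ := exists_subsuperset_card_eq (s := C ∩ A) (t := A) (n := d - 2)
    inter_subset_right h2 (by omega)
  have hBA : ∀ x ∈ A, insert (y x) (A.erase x) ∩ A = A.erase x := by
    intro x hx
    have := (hy x hx).1
    ext z; simp only [mem_inter, mem_insert, mem_erase]
    constructor
    · rintro ⟨h | h, hz⟩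
      · subst h; contradiction
      · exact h
    · rintro ⟨h, h'⟩; exact ⟨Or.inr ⟨h, h'⟩, h'⟩
  have hinj : Set.InjOn (fun x => insert (y x) (A.erase x)) (J : Set (Fin n)) := by
    intro a ha b hb hab
    have haA := hJA ha
    have hbA := hJA hb
    have e : A.erase a = A.erase b := by
      rw [← hBA a haA, ← hBA b hbA]; simp only at hab; rw [hab]
    by_contra hne
    have : a ∈ A.erase b := mem_erase.2 ⟨hne, haA⟩
    rw [← e] at this
    simp at this
  set I := J.image (fun x => insert (y x) (A.erase x)) with hI
  have hIc : I.card = d - 2 := by rw [hI, card_image_of_injOn hinj, hJ]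
  have hCI : C ∉ I := by
    intro h
    rw [hI, mem_image] at h
    obtain ⟨x, hx, rfl⟩ := h
    rw [hBA x (hJA hx), card_erase_of_mem (hJA hx)] at h2
    omega
  have hAI : A ∉ insert C I := by
    intro h
    rcases mem_insert.1 h with h | h
    · rw [← h, inter_self] at h2; omega
    · rw [hI, mem_image] at h
      obtain ⟨x, hx, e⟩ := h
      have := (hy x (hJA hx)).1
      apply this
      have h3 : y x ∈ insert (y x) (A.erase x) := mem_insert_self _ _
      rwa [e] at h3
  apply hci
  refine ⟨insert A (insert C I), ?_, ?_, ?_, ?_⟩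
  · intro Z hZ
    rcases mem_insert.1 hZ with rfl | hZ
    · exact hA
    rcases mem_insert.1 hZ with rfl | hZ
    · exact hC
    rw [hI, mem_image] at hZ
    obtain ⟨x, hx, rfl⟩ := hZ
    exact (hy x (hJA hx)).2
  · rw [card_insert_of_notMem hAI, card_insert_of_notMem hCI, hIc]; omega
  · have hsub : (insert A (insert C I)).sup id ⊆ (C ∪ A) ∪ J.image y := by
      apply Finset.sup_le
      intro Z hZ
      simp only [id]
      rcases mem_insert.1 hZ with rfl | hZ
      · intro z hz; simp [hz]
      rcases mem_insert.1 hZ with rfl | hZ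
      · intro z hz; simp [hz]
      rw [hI, mem_image] at hZ
      obtain ⟨x, hx, rfl⟩ := hZ
      intro z hz
      rcases mem_insert.1 hz with rfl | hz
      · exact mem_union_right _ (mem_image_of_mem _ hx)
      · exact mem_union_left _ (mem_union_right _ (mem_of_mem_erase hz))
    have c1 := card_le_card hsub
    have c2 := card_union_le (C ∪ A) (J.image y)
    have c3 : (J.image y).card ≤ J.card := card_image_le
    have c4 := card_union_add_card_inter C A
    omega
  · rw [eq_empty_iff_forall_notMem]
    intro z hz
    have hle : ∀ Z ∈ insert A (insert C I), z ∈ Z := fun Z hZ =>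
      (Finset.inf_le (f := id) hZ : _ ≤ Z) hz
    have zA := hle A (by simp)
    have zC := hle C (by simp)
    have zJ : z ∈ J := hIJ (mem_inter.2 ⟨zC, zA⟩)
    have zB := hle (insert (y z) (A.erase z))
      (mem_insert_of_mem (mem_insert_of_mem (by rw [hI]; exact mem_image_of_mem _ zJ)))
    rcases mem_insert.1 zB with h | h
    · exact (hy z zA).1 (h ▸ zA)
    · simp at h

open Finset in
lemma key_case2 {n k : ℕ} 
    (F : Finset (Finset (Fin n))) (hunif : ∀ S ∈ F, S.card = k)
    (hci : CondIntersecting 3 (2 * k) F)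
    (A : Finset (Fin n)) (hA : A ∈ F) (y : Fin n → Fin n)
    (hy : ∀ x ∈ A, y x ∉ A ∧ insert (y x) (A.erase x) ∈ F)
    (C : Finset (Fin n)) (hC : C ∈ F) (h2 : (C ∩ A).card = 2)
    (hyC : ∀ x ∈ A, y x ∉ C) :
    False := by
  classical
  have hAk := hunif A hA
  have hCk := hunif C hC
  obtain ⟨p, q, hpq, hI⟩ := card_eq_two.1 h2
  have hp : p ∈ C ∩ A := by rw [hI]; simp
  have hq : q ∈ C ∩ A := by rw [hI]; simp
  rw [mem_inter] at hp hq
  have yp := hy p hp.2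
  have yq := hy q hq.2
  have cp := hyC p hp.2
  have cq := hyC q hq.2
  apply hci
  refine ⟨{C, insert (y p) (A.erase p), insert (y q) (A.erase q)}, ?_, ?_, ?_, ?_⟩
  · intro Z hZ
    simp only [mem_insert, mem_singleton] at hZ
    rcases hZ with rfl | rfl | rfl
    · exact hC
    · exact yp.2
    · exact yq.2
  · rw [card_eq_three]
    refine ⟨_, _, _, ?_, ?_, ?_, rfl⟩
    · intro e; exact cp (e ▸ mem_insert_self _ _)
    · intro e; exact cq (e ▸ mem_insert_self _ _)
    · intro e
      have : p ∈ insert (y p) (A.erase p) := by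
        rw [e]; exact mem_insert_of_mem (mem_erase.2 ⟨hpq, hp.2⟩)
      rcases mem_insert.1 this with h | h
      · exact yp.1 (h ▸ hp.2)
      · simp at h
  · have hsub : ({C, insert (y p) (A.erase p), insert (y q) (A.erase q)} :
        Finset (Finset (Fin n))).sup id ⊆ (C ∪ A) ∪ {y p, y q} := by
      apply Finset.sup_le
      intro Z hZ
      simp only [id]
      simp only [mem_insert, mem_singleton] at hZ
      rcases hZ with rfl | rfl | rfl
      · intro z hz; simp [hz]
      · intro z hz
        simp only [mem_insert, mem_erase, mem_union, mem_singleton] at hz ⊢; tauto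
      · intro z hz
        simp only [mem_insert, mem_erase, mem_union, mem_singleton] at hz ⊢; tauto
    have c1 := card_le_card hsub
    have c2 := card_union_le (C ∪ A) {y p, y q}
    have c3 : ({y p, y q} : Finset (Fin n)).card ≤ 2 := card_le_two
    have c4 := card_union_add_card_inter C A
    omega
  · rw [eq_empty_iff_forall_notMem]
    intro z hz
    have hle : ∀ Z ∈ ({C, insert (y p) (A.erase p), insert (y q) (A.erase q)} :
        Finset (Finset (Fin n))), z ∈ Z := fun Z hZ =>
      (Finset.inf_le (f := id) hZ : _ ≤ Z) hz
    have zC := hle C (by simp)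
    have zP := hle (insert (y p) (A.erase p)) (by simp)
    have zQ := hle (insert (y q) (A.erase q)) (by simp)
    have z1 : z ≠ y p := by rintro rfl; exact cp zC
    have z2 : z ≠ y q := by rintro rfl; exact cq zC
    simp only [mem_insert, mem_erase, z1, z2, false_or] at zP zQ
    have : z ∈ C ∩ A := mem_inter.2 ⟨zC, zP.2⟩
    rw [hI] at this
    simp only [mem_insert, mem_singleton] at this
    tauto

open Finset in
lemma key {n k d : ℕ} (hd : 3 ≤ d) (hdk : d ≤ k)
    (F : Finset (Finset (Fin n))) (hunif : ∀ S ∈ F, S.card = k)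
    (hci : CondIntersecting d (2 * k + d - 3) F)
    (A : Finset (Fin n)) (hA : A ∈ F) (hbad : BadSet F A) :
    ∃ W, A ⊆ W ∧ W.card ≤ 2 * k ∧ ∀ C ∈ F, (C ∩ A).Nonempty → 3 ≤ (C ∩ W).card := by
  classical
  have hAk := hunif A hA
  have : ∀ x, ∃ y, x ∈ A → y ∉ A ∧ insert y (A.erase x) ∈ F := by
    intro x
    by_cases hx : x ∈ A
    · obtain ⟨y, hy⟩ := hbad x hx
      exact ⟨y, fun _ => hy⟩
    · exact ⟨x, fun h => absurd h hx⟩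
  choose y hy using this
  refine ⟨A ∪ A.image y, subset_union_left, ?_, ?_⟩
  · have c2 := card_union_le A (A.image y)
    have c3 : (A.image y).card ≤ A.card := card_image_le
    omega
  · intro C hC hne
    by_contra hlt
    push Not at hlt
    have h1 : 1 ≤ (C ∩ A).card := hne.card_pos
    have hle : (C ∩ A).card ≤ (C ∩ (A ∪ A.image y)).card :=
      card_le_card (inter_subset_inter_left subset_union_left)
    by_cases h2 : (C ∩ A).card ≤ d - 2
    · exact key_case1 hd hdk F hunif hci A hA y hy C hC h1 h2
    · have hd3 : d = 3 := by omega
      subst hd3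
      refine key_case2 F hunif (by simpa using hci) A hA y hy C hC (by omega) ?_
      intro x hx hxC
      have hsub : insert (y x) (C ∩ A) ⊆ C ∩ (A ∪ A.image y) := by
        intro z hz
        rcases mem_insert.1 hz with rfl | hz
        · exact mem_inter.2 ⟨hxC, mem_union_right _ (mem_image_of_mem _ hx)⟩
        · rw [mem_inter] at hz
          exact mem_inter.2 ⟨hz.1, mem_union_left _ hz.2⟩
      have c := card_le_card hsub
      rw [card_insert_of_notMem (fun h => (hy x hx).1 (mem_inter.1 h).2)] at c
      omega

open Finset in
lemma count_three {n k w : ℕ} (hk : 3 ≤ k) (X : Finset (Finset (Fin n))) (W : Finset (Fin n))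
    (hW : W.card ≤ w) (hX : ∀ C ∈ X, C.card = k ∧ 3 ≤ (C ∩ W).card) :
    X.card ≤ w.choose 3 * (n - 3).choose (k - 3) := by
  classical
  have hsub : X ⊆ (W.powersetCard 3).biUnion
      (fun P => ((univ \ P).powersetCard (k - 3)).image (fun S => P ∪ S)) := by
    intro C hC
    obtain ⟨hc, h3⟩ := hX C hC
    obtain ⟨P, hP, hPc⟩ := exists_subset_card_eq h3
    rw [mem_biUnion]
    refine ⟨P, mem_powersetCard.2 ⟨hP.trans inter_subset_right, hPc⟩, ?_⟩
    have hPC : P ⊆ C := hP.trans inter_subset_left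
    refine mem_image.2 ⟨C \ P, mem_powersetCard.2 ⟨sdiff_subset_sdiff (subset_univ _) le_rfl, ?_⟩, ?_⟩
    · rw [card_sdiff_of_subset hPC]; omega
    · exact union_sdiff_of_subset hPC
  calc X.card ≤ _ := card_le_card hsub
    _ ≤ (W.powersetCard 3).card * (n - 3).choose (k - 3) := by
      apply card_biUnion_le_card_mul
      intro P hP
      refine card_image_le.trans ?_
      rw [card_powersetCard, card_sdiff_of_subset (subset_univ _), (mem_powersetCard.1 hP).2]
      simp
    _ ≤ _ := by
      rw [card_powersetCard]
      exact Nat.mul_le_mul_right _ (Nat.choose_le_choose _ hW)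

open Finset in
lemma good_bound {n k : ℕ} (hk : 3 ≤ k) (hkn : k ≤ n)
    (F : Finset (Finset (Fin n))) (hunif : ∀ S ∈ F, S.card = k)
    (G : Finset (Finset (Fin n))) (hG : G ⊆ F) (hgood : ∀ A ∈ G, ¬ BadSet F A) :
    G.card * n ≤ (n - k + 1) * F.shadow.card := by
  classical
  have : ∀ A, ∃ x, A ∈ G → x ∈ A ∧ ∀ y, y ∉ A → insert y (A.erase x) ∉ F := by
    intro A
    by_cases hA : A ∈ G
    · have := hgood A hA
      unfold BadSet at this
      push Not at this
      obtain ⟨x, hx⟩ := this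
      exact ⟨x, fun _ => hx⟩
    · exact ⟨⟨0, by omega⟩, fun h => absurd h hA⟩
  choose x hx using this
  have own : ∀ A ∈ G, ∀ A' ∈ F, A.erase (x A) ⊆ A' → A' = A := by
    intro A hA A' hA' hs
    have hAk := hunif A (hG hA)
    have hAk' := hunif A' hA'
    obtain ⟨hxA, hno⟩ := hx A hA
    have hc : (A' \ A.erase (x A)).card = 1 := by
      rw [card_sdiff_of_subset hs, card_erase_of_mem hxA]; omega
    obtain ⟨y, hy⟩ := card_eq_one.1 hc
    have hAe : A' = insert y (A.erase (x A)) := by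
      rw [← sdiff_union_of_subset hs, hy]; rfl
    by_cases hyA : y ∈ A
    · have hs2 : A' ⊆ A := by
        rw [hAe]; exact insert_subset hyA (erase_subset _ _)
      exact eq_of_subset_of_card_le hs2 (by omega)
    · exact absurd (hAe ▸ hA') (hno y hyA)
  set O := G.image (fun A => A.erase (x A)) with hO
  have hOc : O.card = G.card := by
    rw [hO]; apply card_image_of_injOn
    intro A hA B hB e
    simp only at e
    exact own B hB A (hG hA) (e ▸ erase_subset _ _)
  have hOs : O ⊆ F.shadow := by
    intro T hT
    obtain ⟨A, hA, rfl⟩ := mem_image.1 hT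
    exact erase_mem_shadow (hG hA) (hx A hA).1
  have hcount : G.card * (k - 1) ≤ (F.shadow \ O).card * (n - k + 1) := by
    apply card_mul_le_card_mul (fun A T => T ⊆ A)
    · intro A hA
      have hAk := hunif A (hG hA)
      obtain ⟨hxA, hno⟩ := hx A hA
      have hsub : (A.erase (x A)).image (fun z => A.erase z) ⊆
          bipartiteAbove (fun A T => T ⊆ A) (F.shadow \ O) A := by
        intro T hT
        obtain ⟨z, hz, rfl⟩ := mem_image.1 hT
        obtain ⟨hzx, hzA⟩ := mem_erase.1 hz
        rw [mem_bipartiteAbove]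
        refine ⟨mem_sdiff.2 ⟨erase_mem_shadow (hG hA) hzA, ?_⟩, erase_subset _ _⟩
        intro hmem
        obtain ⟨B, hB, e⟩ := mem_image.1 hmem
        have hAB : A = B := own B hB A (hG hA) (e ▸ erase_subset _ _)
        subst hAB
        have h3 : x A ∈ A.erase z := mem_erase.2 ⟨hzx.symm, hxA⟩
        rw [← e] at h3
        simp at h3
      refine le_trans ?_ (card_le_card hsub)
      rw [card_image_of_injOn, card_erase_of_mem hxA, hAk]
      intro a ha b hb e
      simp only at e
      by_contra hne
      have : a ∈ A.erase b := mem_erase.2 ⟨hne, mem_of_mem_erase ha⟩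
      rw [← e] at this
      simp at this
    · intro T hT
      have hTs := (mem_sdiff.1 hT).1
      have hTc : T.card = k - 1 := by
        obtain ⟨s, hs, a, ha, rfl⟩ := mem_shadow_iff.1 hTs
        rw [card_erase_of_mem ha, hunif s hs]
      have hsub : bipartiteBelow (fun A T => T ⊆ A) G T ⊆ (univ \ T).image (fun a => insert a T) := by
        intro A hA
        rw [mem_bipartiteBelow] at hA
        obtain ⟨hA, hs⟩ := hA
        have hAk := hunif A (hG hA)
        have hc : (A \ T).card = 1 := by
          rw [card_sdiff_of_subset hs]; omega
        obtain ⟨y, hy⟩ := card_eq_one.1 hc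
        refine mem_image.2 ⟨y, ?_, ?_⟩
        · have : y ∈ A \ T := by rw [hy]; simp
          simp [(mem_sdiff.1 this).2]
        · rw [← sdiff_union_of_subset hs, hy]; rfl
      refine (card_le_card hsub).trans (card_image_le.trans ?_)
      rw [card_sdiff_of_subset (subset_univ _), hTc]
      simp
      omega
  rw [card_sdiff_of_subset hOs, hOc] at hcount
  have hle : G.card ≤ F.shadow.card := hOc ▸ card_le_card hOs
  obtain ⟨e, he⟩ := Nat.exists_eq_add_of_le hle
  rw [he] at hcount ⊢
  obtain ⟨j, rfl⟩ := Nat.exists_eq_add_of_le hkn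
  obtain ⟨i, rfl⟩ := Nat.exists_eq_add_of_le hk
  simp only [Nat.add_sub_cancel_left] at hcount ⊢
  have : 3 + i - 1 = i + 2 := by omega
  rw [this] at hcount
  nlinarith

lemma choose_lower (N r : ℕ) : ∀ j, j ≤ N →
    (N + 1).choose (r + 1) ≤ (N + 1 - j).choose (r + 1) + j * N.choose r := by
  intro j
  induction j with
  | zero => intro _; simp
  | succ j ih =>
    intro hj
    have h1 := ih (by omega)
    have e : N + 1 - j = (N - j) + 1 := by omega
    have e' : N + 1 - (j + 1) = N - j := by omega
    rw [e, Nat.choose_succ_succ (N - j)] at h1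
    rw [e']
    have : (N - j).choose r ≤ N.choose r := Nat.choose_le_choose _ (by omega)
    simp only [Nat.succ_eq_add_one] at h1
    nlinarith

lemma arith_coef {r N m c : ℕ} (hn : 3 * (r + 3) ^ 5 ≤ N + 3) (h1 : 243 * (r + 3) ≤ N + 3)
    (h3 : 729 ≤ N + 3) (h6 : 6 * c ≤ (2 * (r + 3)) ^ 3) (hm : N + 3 = (r + 3) + m)
    (h2 : 81 * (r + 3) ^ 2 ≤ N + 3) :
    (r + 1) * ((r + 2) * c * (N + 3)) + (m + 1) * ((r + 1) * (2 * r + 4))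
      ≤ (m + 1) * (N + 1) := by
  have f1 : (r + 1) * (r + 2) ≤ (r + 3) ^ 2 := by nlinarith
  have f2 : (r + 1) * (2 * r + 4) ≤ 2 * (r + 3) ^ 2 := by nlinarith
  have f3 : 3 * c ≤ 4 * (r + 3) ^ 3 := by
    have : (2 * (r + 3)) ^ 3 = 8 * (r + 3) ^ 3 := by ring
    omega
  have f4 : 9 * ((r + 1) * (r + 2) * c) ≤ 4 * (N + 3) := by
    have g1 : ((r + 1) * (r + 2)) * (3 * c) ≤ (r + 3) ^ 2 * (4 * (r + 3) ^ 3) :=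
      Nat.mul_le_mul f1 f3
    have g2 : (r + 3) ^ 2 * (4 * (r + 3) ^ 3) = 4 * (r + 3) ^ 5 := by ring
    have g3 : 9 * ((r + 1) * (r + 2) * c) = 3 * (((r + 1) * (r + 2)) * (3 * c)) := by ring
    omega
  have f5 : 81 * ((r + 1) * (2 * r + 4)) ≤ 2 * (N + 3) := by omega
  have f6 : 40 * (N + 3) ≤ 41 * (m + 1) := by omega
  have e : (r + 1) * ((r + 2) * c * (N + 3)) = ((r + 1) * (r + 2) * c) * (N + 3) := by ring
  rw [e]
  clear e hn h2 h6 f1 f2 f3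
  generalize (r + 1) * (r + 2) * c = a at *
  generalize (r + 1) * (2 * r + 4) = b at *
  have g1 := Nat.mul_le_mul_left a f6
  have g2 := Nat.mul_le_mul_left (m + 1) f4
  have g3 := Nat.mul_le_mul_left (m + 1) f5
  have g4 := Nat.mul_le_mul_left (m + 1) h3
  linarith

lemma arith_bound {n k : ℕ} (hk : 3 ≤ k) (hn : 3 * k ^ 5 ≤ n) :
    (k - 1) * ((2 * k).choose 3 * (n - 3).choose (k - 3)) * n ≤
      (n - k + 1) * (n - 2 * k).choose (k - 2) := by
  have hk4 : 81 ≤ k ^ 4 := by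
    calc 81 = 3 ^ 4 := by norm_num
      _ ≤ k ^ 4 := Nat.pow_le_pow_left hk 4
  have hk2 : 9 ≤ k ^ 2 := by nlinarith
  have hbig : 27 * k ^ 3 ≤ n := by nlinarith [pow_pos (show 0 < k by omega) 3]
  have hbig2 : 81 * k ^ 2 ≤ n := by nlinarith [pow_pos (show 0 < k by omega) 2]
  have hbig1 : 243 * k ≤ n := by nlinarith
  obtain ⟨r, rfl⟩ : ∃ r, k = r + 3 := ⟨k - 3, by omega⟩
  obtain ⟨N, rfl⟩ : ∃ N, n = N + 3 := ⟨n - 3, by omega⟩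
  have hlow := choose_lower N r (2 * (r + 3) - 2) (by omega)
  have habs : (N + 1) * N.choose r = (N + 1).choose (r + 1) * (r + 1) :=
    Nat.add_one_mul_choose_eq N r
  have e1 : N + 3 - 2 * (r + 3) = N + 1 - (2 * (r + 3) - 2) := by omega
  have e2 : r + 3 - 2 = r + 1 := by omega
  have e3 : N + 3 - 3 = N := by omega
  have e4 : r + 3 - 3 = r := by omega
  have e5 : r + 3 - 1 = r + 2 := by omega
  rw [e1, e2, e3, e4, e5]
  set X := N.choose r
  set Y := (N + 1 - (2 * (r + 3) - 2)).choose (r + 1)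
  set Z := (N + 1).choose (r + 1)
  have e6 : 2 * (r + 3) - 2 = 2 * r + 4 := by omega
  rw [e6] at hlow
  have h6 : 6 * (2 * (r + 3)).choose 3 ≤ (2 * (r + 3)) ^ 3 := by
    have := Nat.descFactorial_le_pow (2 * (r + 3)) 3
    rw [Nat.descFactorial_eq_factorial_mul_choose] at this
    simpa [Nat.factorial] using this
  set c := (2 * (r + 3)).choose 3
  obtain ⟨m, hm⟩ : ∃ m, N + 3 = (r + 3) + m := ⟨N - r, by omega⟩
  have e7 : N + 3 - (r + 3) + 1 = m + 1 := by omega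
  rw [e7]
  have hY : (N + 1) * X ≤ (r + 1) * Y + (r + 1) * (2 * r + 4) * X := by nlinarith
  have hcoef : (r + 1) * ((r + 2) * c * (N + 3)) + (m + 1) * ((r + 1) * (2 * r + 4))
      ≤ (m + 1) * (N + 1) := by
    exact arith_coef hn (by omega) (by omega) h6 hm (by simpa using hbig2)
  have : (r + 1) * ((r + 2) * (c * X) * (N + 3)) ≤ (r + 1) * ((m + 1) * Y) := by
    have h1 := Nat.mul_le_mul_right X hcoef
    have h2 := Nat.mul_le_mul_left (m + 1) hY
    nlinarith
  exact Nat.le_of_mul_le_mul_left this (by omega)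

open Finset in
lemma bad_bound {n k d : ℕ} (hd : 3 ≤ d) (hdk : d ≤ k) (hn : 3 * k ^ 5 ≤ n)
    (F : Finset (Finset (Fin n))) (hunif : ∀ S ∈ F, S.card = k)
    (hci : CondIntersecting d (2 * k + d - 3) F)
    (H : Finset (Finset (Fin n))) (hH : H ⊆ F) (hbad : ∀ A ∈ H, BadSet F A) :
    H.card * n ≤ (n - k + 1) * (powersetCard (k - 1) univ \ F.shadow).card := by
  classical
  have hk : 3 ≤ k := hd.trans hdk
  have hcount : H.card * (n - 2 * k).choose (k - 2) ≤
      (powersetCard (k - 1) univ \ F.shadow).card *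
        ((k - 1) * ((2 * k).choose 3 * (n - 3).choose (k - 3))) := by
    apply card_mul_le_card_mul (fun A T => (A ∩ T).Nonempty)
    · intro A hA
      obtain ⟨W, hAW, hW, hprop⟩ := key hd hdk F hunif hci A (hH hA) (hbad A hA)
      have hAk := hunif A (hH hA)
      obtain ⟨y, hy⟩ : A.Nonempty := card_pos.1 (by omega)
      have hsub : ((univ \ W).powersetCard (k - 2)).image (fun S => insert y S) ⊆
          bipartiteAbove (fun A T => (A ∩ T).Nonempty)
            (powersetCard (k - 1) univ \ F.shadow) A := by
        intro T hT
        obtain ⟨S, hS, rfl⟩ := mem_image.1 hT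
        obtain ⟨hSW, hSc⟩ := mem_powersetCard.1 hS
        have hyS : y ∉ S := fun h => (mem_sdiff.1 (hSW h)).2 (hAW hy)
        rw [mem_bipartiteAbove, mem_sdiff, mem_powersetCard]
        refine ⟨⟨⟨subset_univ _, ?_⟩, ?_⟩, ⟨y, mem_inter.2 ⟨hy, mem_insert_self _ _⟩⟩⟩
        · rw [card_insert_of_notMem hyS]; omega
        · intro hsh
          obtain ⟨a, ha, haF⟩ := mem_shadow_iff_insert_mem.1 hsh
          have h3 := hprop _ haF ⟨y, by simp [hy]⟩
          have hs2 : insert a (insert y S) ∩ W ⊆ {a, y} := by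
            intro z hz
            rw [mem_inter, mem_insert, mem_insert] at hz
            obtain ⟨h | h | h, hzW⟩ := hz
            · simp [h]
            · simp [h]
            · exact absurd hzW (mem_sdiff.1 (hSW h)).2
          have := (card_le_card hs2).trans card_le_two
          omega
      refine le_trans ?_ (card_le_card hsub)
      rw [card_image_of_injOn, card_powersetCard, card_sdiff_of_subset (subset_univ _)]
      · apply Nat.choose_le_choose
        simp; omega
      · intro S hS S' hS' e
        simp only at e
        have h1 : ∀ S ∈ (univ \ W).powersetCard (k - 2), y ∉ S := fun S hS h =>
          (mem_sdiff.1 ((mem_powersetCard.1 hS).1 h)).2 (hAW hy)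
        rw [← erase_insert (h1 S hS), e, erase_insert (h1 S' hS')]
    · intro T hT
      have hTc := (mem_powersetCard.1 (mem_sdiff.1 hT).1).2
      have hsub : bipartiteBelow (fun A T => (A ∩ T).Nonempty) H T ⊆
          T.biUnion (fun y => H.filter (fun A => y ∈ A)) := by
        intro A hA
        rw [mem_bipartiteBelow] at hA
        obtain ⟨hA, y, hy⟩ := hA
        rw [mem_inter] at hy
        exact mem_biUnion.2 ⟨y, hy.2, mem_filter.2 ⟨hA, hy.1⟩⟩
      refine (card_le_card hsub).trans ?_
      rw [← hTc]
      apply card_biUnion_le_card_mul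
      intro y hy
      rcases (H.filter (fun A => y ∈ A)).eq_empty_or_nonempty with h | ⟨A, hA⟩
      · rw [h]; simp
      · rw [mem_filter] at hA
        obtain ⟨W, hAW, hW, hprop⟩ := key hd hdk F hunif hci A (hH hA.1) (hbad A hA.1)
        apply count_three hk _ W hW
        intro C hC
        rw [mem_filter] at hC
        exact ⟨hunif C (hH hC.1), hprop C (hH hC.1) ⟨y, mem_inter.2 ⟨hC.2, hA.2⟩⟩⟩
  have har := arith_bound hk hn
  have hpos : 0 < (n - 2 * k).choose (k - 2) := by
    apply Nat.choose_pos
    have : 81 ≤ k ^ 4 := by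
      calc 81 = 3 ^ 4 := by norm_num
        _ ≤ k ^ 4 := Nat.pow_le_pow_left hk 4
    have : 3 * k ≤ n := by nlinarith
    omega
  set Q := (n - 2 * k).choose (k - 2)
  set R := (k - 1) * ((2 * k).choose 3 * (n - 3).choose (k - 3))
  set M := (powersetCard (k - 1) univ \ F.shadow).card
  apply Nat.le_of_mul_le_mul_right (c := Q) _ hpos
  calc H.card * n * Q = H.card * Q * n := by ring
    _ ≤ M * R * n := Nat.mul_le_mul_right _ hcount
    _ = M * (R * n) := by ring
    _ ≤ M * ((n - k + 1) * Q) := Nat.mul_le_mul_left _ har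
    _ = _ := by ring

theorem stmt2 (n k d : ℕ) (hd : 3 ≤ d) (hdk : d ≤ k) (hn : 3 * k ^ 5 ≤ n)
    (F : Finset (Finset (Fin n))) (hunif : ∀ S ∈ F, S.card = k)
    (hci : CondIntersecting d (2 * k + d - 3) F) :
    F.card ≤ (n - 1).choose (k - 1) := by
  classical
  have hk : 3 ≤ k := hd.trans hdk
  have h81 : 81 ≤ k ^ 4 := by
    calc 81 = 3 ^ 4 := by norm_num
      _ ≤ k ^ 4 := Nat.pow_le_pow_left hk 4
  have hkn : k ≤ n := by nlinarith
  have hg := good_bound hk hkn F hunif (F.filter (fun A => ¬ BadSet F A))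
    (Finset.filter_subset _ _) (fun A hA => (Finset.mem_filter.1 hA).2)
  have hb := bad_bound hd hdk hn F hunif hci (F.filter (fun A => BadSet F A))
    (Finset.filter_subset _ _) (fun A hA => (Finset.mem_filter.1 hA).2)
  have hsum := Finset.card_filter_add_card_filter_not (s := F) (fun A => BadSet F A)
  have hsh : F.shadow ⊆ Finset.powersetCard (k - 1) Finset.univ := by
    intro T hT
    obtain ⟨s, hs, a, ha, rfl⟩ := Finset.mem_shadow_iff.1 hT
    rw [Finset.mem_powersetCard, Finset.card_erase_of_mem ha, hunif s hs]
    exact ⟨Finset.subset_univ _, rfl⟩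
  have hc := Finset.card_sdiff_add_card_eq_card hsh
  rw [Finset.card_powersetCard, Finset.card_univ, Fintype.card_fin] at hc
  have hid : (n - k + 1) * n.choose (k - 1) = (n - 1).choose (k - 1) * n := by
    obtain ⟨r, rfl⟩ : ∃ r, k = r + 1 := ⟨k - 1, by omega⟩
    obtain ⟨N, rfl⟩ : ∃ N, n = N + 1 := ⟨n - 1, by omega⟩
    have h1 := Nat.add_one_mul_choose_eq N r
    have h2 := Nat.choose_succ_right_eq (N + 1) r
    simp only [Nat.add_sub_cancel]
    have e : N + 1 - (r + 1) + 1 = N + 1 - r := by omega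
    rw [e]
    nlinarith
  have hnpos : 0 < n := by omega
  apply Nat.le_of_mul_le_mul_right (c := n) _ hnpos
  rw [← hid, ← hc, ← hsum]
  nlinarith
end

section
/- Let k ≥ 3 be an integer and let n be an integer with n ≥ k²/(k−1) (equivalently, (k−1)·n ≥ k²). If F is a (k, 2k)-conditionally intersecting family of k-element subsets of [n], then |F| ≤ binomial(n−1, k−1). -/
/-- Number of members of the family containing `S`. -/
def degIn {n : ℕ} (F : Finset (Finset (Fin n))) (S : Finset (Fin n)) : ℕ :=
  (F.filter (fun A => S ⊆ A)).card

/-- Chvatal-type simplex centred at `A`: all the replacing vertices agree. -/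
theorem simplex_const {n k : ℕ} (F : Finset (Finset (Fin n)))
    (hci : CondIntersecting k (2 * k) F) (A : Finset (Fin n)) (hA : A.card = k)
    (hk : 3 ≤ k) (y : Fin n → Fin n)
    (hy : ∀ x ∈ A, y x ∉ A ∧ insert (y x) (A.erase x) ∈ F) :
    ∃ z, ∀ x ∈ A, y x = z := by
  classical
  by_contra hcon
  push Not at hcon
  apply hci
  refine ⟨A.image (fun x => insert (y x) (A.erase x)), ?_, ?_, ?_, ?_⟩
  · intro S hS
    obtain ⟨x, hx, rfl⟩ := Finset.mem_image.1 hS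
    exact (hy x hx).2
  · rw [Finset.card_image_of_injOn, hA]
    intro a ha b hb hab
    by_contra hne
    have h1 : a ∈ insert (y b) (A.erase b) :=
      Finset.mem_insert_of_mem (Finset.mem_erase.2 ⟨hne, ha⟩)
    have h2 : a ∈ insert (y a) (A.erase a) := by
      have : insert (y a) (A.erase a) = insert (y b) (A.erase b) := hab
      rw [this]; exact h1
    rcases Finset.mem_insert.1 h2 with h | h
    · exact (hy a ha).1 (h ▸ ha)
    · simp at h
  · have hsub : (A.image (fun x => insert (y x) (A.erase x))).sup id ⊆ A ∪ A.image y := by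
      intro v hv
      rw [Finset.mem_sup] at hv
      obtain ⟨S, hS, hvS⟩ := hv
      obtain ⟨x, hx, rfl⟩ := Finset.mem_image.1 hS
      rcases Finset.mem_insert.1 hvS with h | h
      · subst h
        exact Finset.mem_union_right _ (Finset.mem_image_of_mem _ hx)
      · exact Finset.mem_union_left _ (Finset.mem_of_mem_erase h)
    have h1 := Finset.card_le_card hsub
    have h2 := Finset.card_union_le A (A.image y)
    have h3 : (A.image y).card ≤ A.card := Finset.card_image_le
    omega
  · rw [Finset.eq_empty_iff_forall_notMem]
    intro v hv
    have hall : ∀ x ∈ A, v ∈ insert (y x) (A.erase x) := by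
      intro x hx
      have : (A.image (fun x => insert (y x) (A.erase x))).inf id
          ≤ id (insert (y x) (A.erase x)) :=
        Finset.inf_le (Finset.mem_image_of_mem _ hx)
      exact this hv
    by_cases hvA : v ∈ A
    · rcases Finset.mem_insert.1 (hall v hvA) with h | h
      · exact (hy v hvA).1 (h ▸ hvA)
      · simp at h
    · obtain ⟨x, hx, hne⟩ := hcon v
      rcases Finset.mem_insert.1 (hall x hx) with h | h
      · exact hne h.symm
      · exact hvA (Finset.mem_of_mem_erase h)

theorem exists_swap_vertex {n k : ℕ} {A C : Finset (Fin n)} (hA : A.card = k) (hC : C.card = k)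
    {x : Fin n} (hx : x ∈ A) (hne : C ≠ A) (hs : A.erase x ⊆ C) :
    ∃ y, y ∉ A ∧ C = insert y (A.erase x) := by
  classical
  have hc : (C \ A.erase x).card = 1 := by
    rw [Finset.card_sdiff_of_subset hs, Finset.card_erase_of_mem hx]
    have : 0 < A.card := Finset.card_pos.2 ⟨x, hx⟩
    omega
  obtain ⟨y, hy⟩ := Finset.card_eq_one.1 hc
  have hCe : C = insert y (A.erase x) := by
    rw [← Finset.sdiff_union_of_subset hs, hy]; rfl
  refine ⟨y, fun hyA => hne ?_, hCe⟩
  have hyn : y ∉ A.erase x := by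
    have : y ∈ C \ A.erase x := by rw [hy]; simp
    exact (Finset.mem_sdiff.1 this).2
  have : y = x := by
    by_contra h
    exact hyn (Finset.mem_erase.2 ⟨h, hyA⟩)
  rw [hCe, this, Finset.insert_erase hx]

/-- Each member either has an own `(k-1)`-subset or is of the second type. -/
theorem dichotomy {n k : ℕ} (F : Finset (Finset (Fin n)))
    (hunif : ∀ S ∈ F, S.card = k)
    (hci : CondIntersecting k (2 * k) F) (A : Finset (Fin n)) (hAF : A ∈ F)
    (hk : 3 ≤ k) :
    (∃ x ∈ A, ∀ C ∈ F, A.erase x ⊆ C → C = A) ∨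
    ∃ y, y ∉ A ∧ ∀ x ∈ A, insert y (A.erase x) ∈ F ∧
      ∀ C ∈ F, A.erase x ⊆ C → C = A ∨ C = insert y (A.erase x) := by
  classical
  have hA := hunif A hAF
  by_cases h : ∃ x ∈ A, ∀ C ∈ F, A.erase x ⊆ C → C = A
  · exact Or.inl h
  right
  push Not at h
  have h2 : ∀ x, ∃ y, x ∈ A → y ∉ A ∧ insert y (A.erase x) ∈ F := by
    intro x
    by_cases hx : x ∈ A
    · obtain ⟨C, hC, hs, hne⟩ := h x hx
      obtain ⟨y, hy, rfl⟩ := exists_swap_vertex hA (hunif C hC) hx hne hs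
      exact ⟨y, fun _ => ⟨hy, hC⟩⟩
    · exact ⟨x, fun hh => absurd hh hx⟩
  choose f hf using h2
  obtain ⟨z, hz⟩ := simplex_const F hci A hA hk f hf
  have hpos : 0 < A.card := by omega
  obtain ⟨a, ha⟩ := Finset.card_pos.1 hpos
  refine ⟨z, hz a ha ▸ (hf a ha).1, fun x hx => ⟨hz x hx ▸ (hf x hx).2, fun C hC hs => ?_⟩⟩
  by_cases hne : C = A
  · exact Or.inl hne
  right
  obtain ⟨y, hy, rfl⟩ := exists_swap_vertex hA (hunif C hC) hx hne hs
  obtain ⟨w, hw⟩ := simplex_const F hci A hA hk (Function.update f x y) (by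
    intro u hu
    by_cases hux : u = x
    · subst hux; simp only [Function.update_self]; exact ⟨hy, hC⟩
    · rw [Function.update_of_ne hux]; exact hf u hu)
  obtain ⟨b, hb, hbx⟩ := Finset.exists_mem_ne (by omega : 1 < A.card) x
  have e1 := hw x hx
  have e2 := hw b hb
  rw [Function.update_self] at e1
  rw [Function.update_of_ne hbx, hz b hb] at e2
  rw [e1, e2]

theorem degIn_le {n k : ℕ} (F : Finset (Finset (Fin n)))
    (hunif : ∀ S ∈ F, S.card = k) (S : Finset (Fin n)) (hS : S.card + 1 = k) :
    degIn F S ≤ n - S.card := by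
  classical
  have : F.filter (fun A => S ⊆ A) ⊆ (Finset.univ \ S).image (fun y => insert y S) := by
    intro C hC
    obtain ⟨hCF, hs⟩ := Finset.mem_filter.1 hC
    have hc : (C \ S).card = 1 := by
      rw [Finset.card_sdiff_of_subset hs, hunif C hCF]; omega
    obtain ⟨y, hy⟩ := Finset.card_eq_one.1 hc
    have hy' : y ∈ C \ S := by rw [hy]; simp
    refine Finset.mem_image.2 ⟨y, by simpa using (Finset.mem_sdiff.1 hy').2, ?_⟩
    rw [← Finset.sdiff_union_of_subset hs, hy]; rfl
  refine (Finset.card_le_card this).trans (Finset.card_image_le.trans ?_)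
  rw [Finset.card_sdiff_of_subset (Finset.subset_univ _)]
  simp

theorem weight_sum {n k : ℕ} (F : Finset (Finset (Fin n)))
    (hunif : ∀ S ∈ F, S.card = k) :
    ∑ A ∈ F, ∑ x ∈ A, (1 : ℚ) / degIn F (A.erase x) ≤ (n.choose (k - 1) : ℚ) := by
  classical
  have h1 : ∀ A ∈ F, ∑ x ∈ A, (1 : ℚ) / degIn F (A.erase x)
      ≤ ∑ S ∈ (Finset.univ : Finset (Fin n)).powersetCard (k - 1),
        if S ⊆ A then (1 : ℚ) / degIn F S else 0 := by
    intro A hA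
    rw [← Finset.sum_filter]
    have hinj : Set.InjOn (fun x => A.erase x) (A : Set (Fin n)) := by
      intro a ha b hb hab
      exact (Finset.erase_inj A ha).1 hab
    rw [← Finset.sum_image (f := fun S => (1 : ℚ) / degIn F S) hinj]
    apply Finset.sum_le_sum_of_subset_of_nonneg
    · intro S hS
      obtain ⟨x, hx, rfl⟩ := Finset.mem_image.1 hS
      simp only [Finset.mem_filter, Finset.mem_powersetCard]
      refine ⟨⟨Finset.subset_univ _, ?_⟩, Finset.erase_subset _ _⟩
      rw [Finset.card_erase_of_mem hx, hunif A hA]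
    · intros; positivity
  refine (Finset.sum_le_sum h1).trans ?_
  rw [Finset.sum_comm]
  have h2 : ∀ S ∈ (Finset.univ : Finset (Fin n)).powersetCard (k - 1),
      (∑ A ∈ F, if S ⊆ A then (1 : ℚ) / degIn F S else 0) ≤ 1 := by
    intro S _
    rw [← Finset.sum_filter, Finset.sum_const, nsmul_eq_mul]
    change (degIn F S : ℚ) * (1 / degIn F S) ≤ 1
    rw [mul_one_div]
    exact div_self_le_one _
  refine (Finset.sum_le_sum h2).trans ?_
  simp

theorem weight_type1 {n k : ℕ} (F : Finset (Finset (Fin n)))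
    (hunif : ∀ S ∈ F, S.card = k) (hk : 3 ≤ k) (hn : k + 2 ≤ n)
    (A : Finset (Fin n)) (hAF : A ∈ F)
    (h : ∃ x ∈ A, ∀ C ∈ F, A.erase x ⊆ C → C = A) :
    (n : ℚ) / (n - k + 1) ≤ ∑ x ∈ A, (1 : ℚ) / degIn F (A.erase x) := by
  classical
  obtain ⟨x, hx, hown⟩ := h
  have hA := hunif A hAF
  have hnk : (k : ℚ) + 2 ≤ n := by exact_mod_cast hn
  have hpos : (0 : ℚ) < n - k + 1 := by linarith
  have hd1 : degIn F (A.erase x) = 1 := by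
    unfold degIn
    rw [Finset.card_eq_one]
    refine ⟨A, ?_⟩
    ext C
    simp only [Finset.mem_filter, Finset.mem_singleton]
    constructor
    · rintro ⟨h1, h2⟩; exact hown C h1 h2
    · rintro rfl; exact ⟨hAF, Finset.erase_subset _ _⟩
  rw [← Finset.add_sum_erase A _ hx, hd1]
  have hlow : ∀ u ∈ A.erase x, (1 : ℚ) / (n - k + 1) ≤ 1 / degIn F (A.erase u) := by
    intro u hu
    have hu' := Finset.mem_of_mem_erase hu
    have hc : (A.erase u).card = k - 1 := by rw [Finset.card_erase_of_mem hu', hA]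
    have hle := degIn_le F hunif (A.erase u) (by omega)
    have hp : 0 < degIn F (A.erase u) :=
      Finset.card_pos.2 ⟨A, Finset.mem_filter.2 ⟨hAF, Finset.erase_subset _ _⟩⟩
    have hp' : (0 : ℚ) < degIn F (A.erase u) := by exact_mod_cast hp
    apply one_div_le_one_div_of_le hp'
    rw [hc] at hle
    have : degIn F (A.erase u) + k ≤ n + 1 := by omega
    have : (degIn F (A.erase u) : ℚ) + k ≤ n + 1 := by exact_mod_cast this
    linarith
  have hs := Finset.card_nsmul_le_sum _ _ _ hlow
  rw [Finset.card_erase_of_mem hx, hA, nsmul_eq_mul, Nat.cast_sub (by omega)] at hs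
  have : (n : ℚ) / (n - k + 1) = 1 / (1 : ℕ) + ((k : ℚ) - (1 : ℕ)) * (1 / (n - k + 1)) := by
    push_cast
    field_simp
    ring
  rw [this]
  linarith

theorem weight_type2 {n k : ℕ} (F : Finset (Finset (Fin n)))
    (hunif : ∀ S ∈ F, S.card = k) (hk : 3 ≤ k) (hn : k + 2 ≤ n)
    (hn2 : 4 ≤ k ∨ 6 ≤ n)
    (A : Finset (Fin n)) (hAF : A ∈ F)
    (h : ∃ y, y ∉ A ∧ ∀ x ∈ A, insert y (A.erase x) ∈ F ∧
      ∀ C ∈ F, A.erase x ⊆ C → C = A ∨ C = insert y (A.erase x)) :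
    (n : ℚ) / (n - k + 1) ≤ ∑ x ∈ A, (1 : ℚ) / degIn F (A.erase x) := by
  classical
  obtain ⟨y, hy, hyx⟩ := h
  have hA := hunif A hAF
  have hnk : (k : ℚ) + 2 ≤ n := by exact_mod_cast hn
  have hk' : (3 : ℚ) ≤ k := by exact_mod_cast hk
  have hpos : (0 : ℚ) < n - k + 1 := by linarith
  have hlow : ∀ u ∈ A, (1 : ℚ) / 2 ≤ 1 / degIn F (A.erase u) := by
    intro u hu
    have hp : 0 < degIn F (A.erase u) :=
      Finset.card_pos.2 ⟨A, Finset.mem_filter.2 ⟨hAF, Finset.erase_subset _ _⟩⟩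
    have hp' : (0 : ℚ) < degIn F (A.erase u) := by exact_mod_cast hp
    apply one_div_le_one_div_of_le hp'
    have : degIn F (A.erase u) ≤ 2 := by
      have hsub : F.filter (fun C => A.erase u ⊆ C) ⊆ {A, insert y (A.erase u)} := by
        intro C hC
        obtain ⟨h1, h2⟩ := Finset.mem_filter.1 hC
        simpa using (hyx u hu).2 C h1 h2
      exact (Finset.card_le_card hsub).trans Finset.card_le_two
    exact_mod_cast this
  have hs := Finset.card_nsmul_le_sum _ _ _ hlow
  rw [hA, nsmul_eq_mul] at hs
  refine le_trans ?_ hs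
  rw [div_le_iff₀ hpos]
  rcases hn2 with h4 | h6
  · have h4' : (4 : ℚ) ≤ k := by exact_mod_cast h4
    nlinarith
  · have h6' : (6 : ℚ) ≤ n := by exact_mod_cast h6
    rcases Nat.lt_or_ge k 4 with h | h4
    · have : k = 3 := by omega
      subst this
      push_cast
      linarith
    · have h4' : (4 : ℚ) ≤ k := by exact_mod_cast h4
      nlinarith

theorem small_case (F : Finset (Finset (Fin 5)))
    (hunif : ∀ S ∈ F, S.card = 3)
    (hci : CondIntersecting 3 (2 * 3) F) (A : Finset (Fin 5)) (hAF : A ∈ F)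
    (h : ∃ y, y ∉ A ∧ ∀ x ∈ A, insert y (A.erase x) ∈ F ∧
      ∀ C ∈ F, A.erase x ⊆ C → C = A ∨ C = insert y (A.erase x)) :
    F.card ≤ 6 := by
  classical
  obtain ⟨y, hy, hyx⟩ := h
  have hA := hunif A hAF
  have hsub : F ⊆ (insert y A).powersetCard 3 := by
    intro C hC
    rw [Finset.mem_powersetCard]
    refine ⟨?_, hunif C hC⟩
    by_contra hns
    have hCA : C ≠ A := by
      rintro rfl; exact hns (Finset.subset_insert _ _)
    have hCx : ∀ x, C ≠ insert y (A.erase x) := by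
      rintro x rfl
      exact hns (Finset.insert_subset_insert _ (Finset.erase_subset _ _))
    have hno : ∀ x ∈ A, ¬ A.erase x ⊆ C := by
      intro x hx hs
      rcases (hyx x hx).2 C hC hs with h | h
      · exact hCA h
      · exact hCx x h
    have hyes : ∀ a ∈ A, ∃ v ∈ C, v ∈ A.erase a := by
      intro a ha
      by_contra hcon
      push Not at hcon
      have hAa : A ≠ insert y (A.erase a) := by
        intro h
        exact hy (h ▸ Finset.mem_insert_self _ _)
      apply hci
      refine ⟨{C, A, insert y (A.erase a)}, ?_, ?_, ?_, ?_⟩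
      · intro S hS
        simp only [Finset.mem_insert, Finset.mem_singleton] at hS
        rcases hS with rfl | rfl | rfl
        · exact hC
        · exact hAF
        · exact (hyx a ha).1
      · exact Finset.card_eq_three.2 ⟨_, _, _, hCA, hCx a, hAa, rfl⟩
      · have := Finset.card_le_univ (({C, A, insert y (A.erase a)} : Finset (Finset (Fin 5))).sup id)
        simp only [Fintype.card_fin] at this
        omega
      · rw [Finset.eq_empty_iff_forall_notMem]
        intro v hv
        simp only [Finset.inf_insert, Finset.inf_singleton, id, Finset.inf_eq_inter,
          Finset.mem_inter, Finset.mem_insert] at hv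
        obtain ⟨h1, h2, h3⟩ := hv
        rcases h3 with h3 | h3
        · exact hy (h3 ▸ h2)
        · exact hcon v h1 h3
    obtain ⟨a, ha⟩ := Finset.card_pos.1 (by omega : 0 < A.card)
    obtain ⟨b, hbC, hbA⟩ := hyes a ha
    have hb := Finset.mem_of_mem_erase hbA
    obtain ⟨c, hcC, hcA⟩ := hyes b hb
    have hc := Finset.mem_of_mem_erase hcA
    have hcb := Finset.ne_of_mem_erase hcA
    have h1 : (((A.erase b).erase c)).card = 1 := by
      rw [Finset.card_erase_of_mem hcA, Finset.card_erase_of_mem hb, hA]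
    obtain ⟨d, hd⟩ := Finset.card_eq_one.1 h1
    have hdm : d ∈ (A.erase b).erase c := by rw [hd]; simp
    apply hno d (Finset.mem_of_mem_erase (Finset.mem_of_mem_erase hdm))
    intro v hv
    by_cases e1 : v = b
    · exact e1 ▸ hbC
    by_cases e2 : v = c
    · exact e2 ▸ hcC
    have : v ∈ (A.erase b).erase c :=
      Finset.mem_erase.2 ⟨e2, Finset.mem_erase.2 ⟨e1, Finset.mem_of_mem_erase hv⟩⟩
    rw [hd, Finset.mem_singleton] at this
    exact absurd this (Finset.ne_of_mem_erase hv)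
  have := Finset.card_le_card hsub
  rw [Finset.card_powersetCard, Finset.card_insert_of_notMem hy, hA] at this
  have h4 : (3 + 1).choose 3 = 4 := by decide
  omega

theorem stmt3 (n k : ℕ) (hk : 3 ≤ k) (hn : k ^ 2 ≤ (k - 1) * n)
    (F : Finset (Finset (Fin n))) (hunif : ∀ S ∈ F, S.card = k)
    (hci : CondIntersecting k (2 * k) F) :
    F.card ≤ (n - 1).choose (k - 1) := by
  classical
  have hn' : k + 2 ≤ n := by
    by_contra h
    have h1 : n ≤ k + 1 := by omega
    obtain ⟨m, rfl⟩ : ∃ m, k = m + 1 := ⟨k - 1, by omega⟩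
    simp only [Nat.add_sub_cancel] at hn
    have := Nat.mul_le_mul_left m h1
    nlinarith
  by_cases hw : ∀ A ∈ F, (n : ℚ) / (n - k + 1) ≤ ∑ x ∈ A, (1 : ℚ) / degIn F (A.erase x)
  · have h1 := Finset.card_nsmul_le_sum _ _ _ hw
    have h2 := h1.trans (weight_sum F hunif)
    rw [nsmul_eq_mul] at h2
    have hnk : (k : ℚ) + 2 ≤ n := by exact_mod_cast hn'
    have hpos : (0 : ℚ) < n - k + 1 := by linarith
    have hn0 : (0 : ℚ) < n := by
      have : (0 : ℚ) ≤ k := by positivity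
      linarith
    obtain ⟨m, rfl⟩ : ∃ m, n = m + 1 := ⟨n - 1, by omega⟩
    obtain ⟨j, rfl⟩ : ∃ j, k = j + 1 := ⟨k - 1, by omega⟩
    simp only [Nat.add_sub_cancel] at h2 ⊢
    have hid := Nat.choose_mul_succ_eq m j
    have hid' : (m.choose j : ℚ) * (m + 1) = (m + 1).choose j * ((m : ℚ) + 1 - j) := by
      have : ((m + 1 - j : ℕ) : ℚ) = (m : ℚ) + 1 - j := by
        rw [Nat.cast_sub (by omega)]; push_cast; ring
      rw [← this]
      exact_mod_cast hid
    push_cast at h2 hpos hn0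
    rw [mul_div_assoc', div_le_iff₀ hpos] at h2
    have h3 : (F.card : ℚ) * (m + 1) ≤ m.choose j * (m + 1) := by
      rw [hid']
      calc _ ≤ _ := h2
        _ = _ := by ring
    have h4 := le_of_mul_le_mul_right h3 hn0
    exact_mod_cast h4
  · push Not at hw
    obtain ⟨A, hAF, hlt⟩ := hw
    rcases dichotomy F hunif hci A hAF hk with h | h
    · exact absurd (weight_type1 F hunif hk hn' A hAF h) (not_le.2 hlt)
    · by_cases hn2 : 4 ≤ k ∨ 6 ≤ n
      · exact absurd (weight_type2 F hunif hk hn' hn2 A hAF h) (not_le.2 hlt)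
      · obtain rfl : k = 3 := by omega
        obtain rfl : n = 5 := by omega
        have := small_case F hunif hci A hAF h
        simpa [Nat.choose] using this
end

section
/- Let k ≥ 3 be an integer and let n ≥ 3k·binomial(2k, k). If F is a family of k-element subsets of [n] that is (3, 2k)-conditionally intersecting but not intersecting (i.e., F contains two disjoint members), then |F| ≤ binomial(n−k−1, k−1) + 1. -/
theorem choose_lower_s4 (a c t : ℕ) : a.choose (c+1) + t * a.choose c ≤ (a+t).choose (c+1) := by
  induction t with
  | zero => simp
  | succ t ih =>
    have h1 : (a + (t+1)).choose (c+1) = (a+t).choose c + (a+t).choose (c+1) := Nat.choose_succ_succ _ _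
    have h2 : a.choose c ≤ (a+t).choose c := Nat.choose_le_choose c (Nat.le_add_right a t)
    rw [h1]; nlinarith

theorem choose_upper (a c t : ℕ) :
    (a+t+1).choose (c+1) ≤ a.choose (c+1) + (t+1) * (a+t).choose c := by
  induction t with
  | zero => 
    have h1 : (a + 0 + 1).choose (c+1) = (a).choose c + (a).choose (c+1) := Nat.choose_succ_succ _ _
    rw [h1]; simp; omega
  | succ t ih =>
    have h1 : (a + (t+1) + 1).choose (c+1) = (a+t+1).choose c + (a+t+1).choose (c+1) :=
      Nat.choose_succ_succ _ _
    have h2 : (a+t).choose c ≤ (a+t+1).choose c := Nat.choose_le_choose c (Nat.le_succ _)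
    have h3 : a + (t+1) = a+t+1 := by ring
    rw [h1, h3]; nlinarith

theorem pow_le_central (k : ℕ) (hk : 5 ≤ k) : k^4 ≤ 3 * (2*k).choose k := by
  induction k, hk using Nat.le_induction with
  | base => decide
  | succ k hk ih =>
    have h := Nat.succ_mul_centralBinom_succ k
    rw [Nat.centralBinom_eq_two_mul_choose, Nat.centralBinom_eq_two_mul_choose] at h
    have h5 : (k+1)^5 ≤ 2 * (2*k+1) * k^4 := by
      obtain ⟨t, rfl⟩ := Nat.exists_eq_add_of_le hk
      ring_nf
      nlinarith [Nat.zero_le t, Nat.zero_le (t^2), Nat.zero_le (t^3), Nat.zero_le (t^4), Nat.zero_le (t^5)]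
    have : (k+1) * (k+1)^4 ≤ (k+1) * (3 * (2*(k+1)).choose (k+1)) := by
      calc (k+1) * (k+1)^4 = (k+1)^5 := by ring
        _ ≤ _ := h5
        _ ≤ 2 * (2*k+1) * (3 * (2*k).choose k) := Nat.mul_le_mul_left _ ih
        _ = 3 * (2 * (2*k+1) * (2*k).choose k) := by ring
        _ = _ := by rw [← h]; ring
    exact Nat.le_of_mul_le_mul_left this (Nat.succ_pos k)

theorem n_cases (n k : ℕ) (hk : 3 ≤ k) (hn : 3 * k * (2 * k).choose k ≤ n) :
    (k = 3 ∧ 180 ≤ n) ∨ (k = 4 ∧ 840 ≤ n) ∨ (5 ≤ k ∧ k^5 ≤ n) := by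
  rcases (by omega : k = 3 ∨ k = 4 ∨ 5 ≤ k) with rfl | rfl | h
  · left; exact ⟨rfl, le_trans (by decide) hn⟩
  · right; left; exact ⟨rfl, le_trans (by decide) hn⟩
  · right; right
    refine ⟨h, le_trans ?_ hn⟩
    have := pow_le_central k h
    calc k^5 = k * k^4 := by ring
      _ ≤ k * (3 * (2*k).choose k) := Nat.mul_le_mul_left _ this
      _ = _ := by ring

theorem poly_one (n k : ℕ) (hk : 3 ≤ k) (hn : 3 * k * (2 * k).choose k ≤ n) :
    (k^2+4) * ((k-1)^2 * (k-2)) + 2 < n := by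
  rcases n_cases n k hk hn with ⟨rfl, h⟩ | ⟨rfl, h⟩ | ⟨h5, h⟩
  · omega
  · omega
  · obtain ⟨t, rfl⟩ := Nat.exists_eq_add_of_le h5
    refine lt_of_lt_of_le ?_ h
    have e1 : 5 + t - 1 = t + 4 := by omega
    have e2 : 5 + t - 2 = t + 3 := by omega
    rw [e1, e2]
    ring_nf
    nlinarith [Nat.zero_le t, Nat.zero_le (t^2), Nat.zero_le (t^3), Nat.zero_le (t^4), Nat.zero_le (t^5)]

-- in terms of c = C(k,3), a = C(m,2), b = C(m,3)
theorem poly_two (n k m : ℕ) (hk : 3 ≤ k) (hn : 3 * k * (2 * k).choose k ≤ n)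
    (hm : k + 1 ≤ m) (hm2 : m ≤ 2*k^2+6) :
    (k.choose 3 : ℝ) * (k-2) * m.choose 2 + (k-2) * m.choose 3
      ≤ (m-k) * k.choose 3 * ((n-2) - (k-2)*(m-1)) := by
  have c3 : ∀ a : ℕ, (a.choose 3 : ℝ) = a*(a-1)*(a-2)/6 := by
    intro a
    induction a with
    | zero => simp
    | succ a ih => 
      rw [Nat.choose_succ_succ, Nat.cast_add, ih, Nat.cast_choose_two]; push_cast; ring
  rcases n_cases n k hk hn with ⟨rfl, h⟩ | ⟨rfl, h⟩ | ⟨h5, h⟩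
  · have h' : (180:ℝ) ≤ n := by exact_mod_cast h
    rw [c3, c3, Nat.cast_choose_two]
    have : m ≤ 24 := by omega
    clear hm2 h hn
    interval_cases m <;> norm_num <;> linarith
  · have h' : (840:ℝ) ≤ n := by exact_mod_cast h
    rw [c3, c3, Nat.cast_choose_two]
    have : m ≤ 38 := by omega
    clear hm2 h hn
    interval_cases m <;> norm_num <;> linarith
  · have h' : (k:ℝ)^5 ≤ n := by exact_mod_cast h
    have hm' : (k:ℝ)+1 ≤ m := by exact_mod_cast hm
    have hm2' : (m:ℝ) ≤ 2*k^2+6 := by exact_mod_cast hm2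
    have hk' : (5:ℝ) ≤ k := by exact_mod_cast h5
    rw [c3, c3, Nat.cast_choose_two]
    generalize (k:ℝ) = K at *
    generalize (m:ℝ) = M at *
    generalize (n:ℝ) = N at *
    obtain ⟨t, rfl⟩ : ∃ t, K = 5 + t := ⟨K-5, by ring⟩
    have ht : 0 ≤ t := by linarith
    have key : (5+t+1)*(M-1)*(M-2) ≤
        (5+t)*(5+t-1)*((N-2) - (5+t-2)*(M-1) - (5+t-2)*(5+t+1)*(M-1)/2) := by
      have u1 : M - 1 ≤ 2*(5+t)^2+5 := by linarith
      have u0 : 0 ≤ M-1 := by linarith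
      have v1 : (M-1)*(M-2) ≤ (2*(5+t)^2+5)*(2*(5+t)^2+5) :=
        mul_le_mul u1 (by linarith) (by linarith) (by positivity)
      have v2 : (5+t+1)*(M-1)*(M-2) ≤ (5+t+1)*((2*(5+t)^2+5)*(2*(5+t)^2+5)) := by
        rw [mul_assoc]; exact mul_le_mul_of_nonneg_left v1 (by linarith)
      have v3 : (5+t-2)*(5+t+3)/2*(M-1) ≤ (5+t-2)*(5+t+3)/2*(2*(5+t)^2+5) :=
        mul_le_mul_of_nonneg_left u1 (by have : 0 ≤ 5+t-2 := by linarith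
                                         positivity)
      have v4 : (5+t)*(5+t-1)*(((5+t)^5-2) - (5+t-2)*(5+t+3)/2*(2*(5+t)^2+5)) ≤
         (5+t)*(5+t-1)*((N-2) - (5+t-2)*(M-1) - (5+t-2)*(5+t+1)*(M-1)/2) := by
        apply mul_le_mul_of_nonneg_left _ (by have : 0 ≤ 5+t-1 := by linarith
                                              positivity)
        linarith
      refine le_trans v2 (le_trans ?_ v4)
      have : 0 ≤ (5+t)*(5+t-1)*(((5+t)^5-2) - (5+t-2)*(5+t+3)/2*(2*(5+t)^2+5)) - 
        (5+t+1)*((2*(5+t)^2+5)*(2*(5+t)^2+5)) := by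
        ring_nf; positivity
      linarith
    have hMd : M ≤ (5+t+1)*(M-(5+t)) := by nlinarith
    have hP : 0 ≤ (5+t)*(5+t-1)*(5+t-2)/6 * (5+t-2) * (M-1)/2 := by
      have : 0 ≤ 5+t-1 := by linarith
      have : 0 ≤ 5+t-2 := by linarith
      have : 0 ≤ M-1 := by linarith
      positivity
    have hQ : 0 ≤ (5+t-2)*(M-1)*(M-2)/6 := by
      have : 0 ≤ 5+t-2 := by linarith
      have : 0 ≤ M-1 := by linarith
      have : 0 ≤ M-2 := by linarith
      positivity
    have w1 := mul_le_mul_of_nonneg_left hMd hP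
    have w2 := mul_le_mul_of_nonneg_left hMd hQ
    have w3 := mul_le_mul_of_nonneg_left key (show 0 ≤ (5+t-2)/6*(M-(5+t)) by
      have : 0 ≤ 5+t-2 := by linarith
      have : 0 ≤ M-(5+t) := by linarith
      positivity)
    linarith

theorem numQX (n k : ℕ) (hk : 3 ≤ k) (hn : k ≤ n) :
    (n-2) * (n-3).choose (k-3) = (k-2) * (n-2).choose (k-2) := by
  obtain ⟨j, rfl⟩ := Nat.exists_eq_add_of_le hk
  obtain ⟨p, rfl⟩ := Nat.exists_eq_add_of_le (le_trans hk hn)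
  have e1 : 3 + p - 2 = p + 1 := by omega
  have e2 : 3 + p - 3 = p := by omega
  have e3 : 3 + j - 3 = j := by omega
  have e4 : 3 + j - 2 = j + 1 := by omega
  rw [e1, e2, e3, e4]
  have := Nat.add_one_mul_choose_eq p j
  rw [this]; ring

theorem n_big (n k : ℕ) (hk : 3 ≤ k) (hn : 3 * k * (2 * k).choose k ≤ n) :
    12 * k + 6 ≤ n := by
  rcases n_cases n k hk hn with ⟨rfl, h⟩ | ⟨rfl, h⟩ | ⟨h5, h⟩
  · omega
  · omega
  · refine le_trans ?_ h
    have : 5^4 ≤ k^4 := Nat.pow_le_pow_left h5 4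
    calc 12 * k + 6 ≤ k * 5^4 := by omega
      _ ≤ k * k^4 := Nat.mul_le_mul_left _ this
      _ = k^5 := by ring

theorem numX (n k : ℕ) (hk : 3 ≤ k) (hn : k ≤ n) : 0 < (n-3).choose (k-3) :=
  Nat.choose_pos (by omega)

theorem numM (n k : ℕ) (hk : 3 ≤ k) (hn : 3 * k * (2 * k).choose k ≤ n) :
    (k^2+4) * ((k-1)^2 * (n-3).choose (k-3)) < (n-2).choose (k-2) := by
  have hb := n_big n k hk hn
  have h1 := numQX n k hk (by omega)
  have h2 := poly_one n k hk hn
  have hX := numX n k hk (by omega)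
  have : (k-2) * ((k^2+4) * ((k-1)^2 * (n-3).choose (k-3))) < (k-2) * (n-2).choose (k-2) := by
    rw [← h1]
    calc _ = ((k^2+4) * ((k-1)^2 * (k-2))) * (n-3).choose (k-3) := by ring
      _ < _ := Nat.mul_lt_mul_of_pos_right (by omega) hX
  exact Nat.lt_of_mul_lt_mul_left this

theorem numq (n k : ℕ) (hk : 4 ≤ k) (hn : 3 * k * (2 * k).choose k ≤ n) :
    (k^2+4) * (n-4).choose (k-4) < (n-3).choose (k-3) := by
  have hb := n_big n k (by omega) hn
  have h2 := poly_one n k (by omega) hn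
  obtain ⟨j, rfl⟩ := Nat.exists_eq_add_of_le hk
  obtain ⟨p, rfl⟩ := Nat.exists_eq_add_of_le (show 4 ≤ n by omega)
  have e1 : 4 + p - 4 = p := by omega
  have e2 : 4 + p - 3 = p + 1 := by omega
  have e3 : 4 + j - 3 = j + 1 := by omega
  have e4 : 4 + j - 4 = j := by omega
  have e5 : 4 + j - 2 = j + 2 := by omega
  have e6 : 4 + j - 1 = j + 3 := by omega
  rw [e1, e2, e3, e4]
  rw [e5, e6] at h2
  have hX : 0 < p.choose j := Nat.choose_pos (by omega)
  have h := Nat.add_one_mul_choose_eq p j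
  have h3 : (j+1) * ((4+j)^2+4) < p + 1 := by
    have : (j+1)*((4+j)^2+4) + 2 ≤ ((4+j)^2+4)*((j+3)^2*(j+2)) := by
      have a : (j+1) * ((4+j)^2+4) + ((4+j)^2+4) ≤ ((4+j)^2+4)*((j+3)^2*(j+2)) := by
        calc _ = ((4+j)^2+4) * (1 * (j+2)) := by ring
          _ ≤ _ := by gcongr; nlinarith
      nlinarith
    nlinarith
  have : (j+1) * (((4+j)^2+4) * p.choose j) < (j+1) * (p+1).choose (j+1) := by
    calc _ = ((j+1) * ((4+j)^2+4)) * p.choose j := by ring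
      _ < (p+1) * p.choose j := Nat.mul_lt_mul_of_pos_right h3 hX
      _ = _ := by rw [h]; ring
  exact Nat.lt_of_mul_lt_mul_left this

theorem numA (n k f : ℕ) (hk : 3 ≤ k) (hn : 12 * k + 6 ≤ n)
    (hf : (n-k-1).choose (k-1) ≤ f) :
    n.choose (k-1) + n * (n-2).choose (k-2) ≤ k * f + (k^2+3) * (n-2).choose (k-2) := by
  obtain ⟨j, rfl⟩ := Nat.exists_eq_add_of_le hk
  obtain ⟨p, rfl⟩ := Nat.exists_eq_add_of_le (show 3 ≤ n by omega)
  have e1 : 3 + p - 2 = p + 1 := by omega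
  have e2 : 3 + j - 2 = j + 1 := by omega
  have e3 : 3 + j - 1 = j + 2 := by omega
  have e4 : 3 + p - (3+j) - 1 = p - j - 1 := by omega
  rw [e1, e2, e3]
  rw [e4, e3] at hf
  have h1 := choose_upper (p-j-1) (j+1) (j+2)
  have e5 : p - j - 1 + (j+2) + 1 = p+2 := by omega
  have e6 : p - j - 1 + (j+2) = p+1 := by omega
  rw [e5, e6] at h1
  have h2 : (3+p).choose (j+2) = (p+2).choose (j+1) + (p+2).choose (j+2) := by
    rw [add_comm 3 p]; exact Nat.choose_succ_succ _ _
  have h3 : (p+2).choose (j+1) = (p+1).choose j + (p+1).choose (j+1) := Nat.choose_succ_succ _ _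
  have h4 : (p+1).choose j ≤ (p+1).choose (j+1) :=
    Nat.choose_le_succ_of_lt_half_left (by omega)
  have h5 := Nat.add_one_mul_choose_eq (p+1) (j+1)
  have h5' : (p+1+1) * (p+1).choose (j+1) = (p+2).choose (j+2) * (j+2) := h5
  have h6 : (p+2).choose (j+2) ≤ f + (3+j) * (p+1).choose (j+1) := by
    have : (p+2).choose (j+2) ≤ (p-j-1).choose (j+2) + (j+3) * (p+1).choose (j+1) := h1
    linarith
  have h7 := Nat.mul_le_mul_left (3+j) h6
  nlinarith

theorem numB (n k m : ℕ) (hk : 3 ≤ k) (hn : 3 * k * (2 * k).choose k ≤ n)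
    (hm : k + 1 ≤ m) (hm2 : m ≤ 2*k^2+6) (hmn : m + k ≤ n) :
    (n-m-1).choose (k-1) + m.choose 2 * (n-3).choose (k-3) + m.choose k
      ≤ (n-k-1).choose (k-1) := by
  have hb := n_big n k hk hn
  have hp := poly_two n k m hk hn hm hm2
  have hqx := numQX n k hk (by omega)
  have hX := numX n k hk (by omega)
  have h1 : (n-m-1).choose (k-1) + (m-k) * (n-m-1).choose (k-2) ≤ (n-k-1).choose (k-1) := by
    have := choose_lower_s4 (n-m-1) (k-2) (m-k)
    rwa [show k - 2 + 1 = k-1 by omega, show n-m-1+(m-k) = n-k-1 by omega] at this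
  have h2 : (n-2).choose (k-2) ≤ (n-m-1).choose (k-2) + (m-1) * (n-3).choose (k-3) := by
    have := choose_upper (n-m-1) (k-3) (m-2)
    rwa [show k - 3 + 1 = k-2 by omega, show n-m-1+(m-2)+1 = n-2 by omega,
      show n-m-1+(m-2) = n-3 by omega, show m-2+1 = m-1 by omega] at this
  have h3 : m.choose k * k.choose 3 ≤ m.choose 3 * (n-3).choose (k-3) := by
    rw [Nat.choose_mul (by omega)]
    exact Nat.mul_le_mul_left _ (Nat.choose_le_choose _ (by omega))
  have hc : 0 < k.choose 3 := Nat.choose_pos hk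
  suffices h : m.choose 2 * (n-3).choose (k-3) + m.choose k ≤ (m-k) * (n-m-1).choose (k-2) by
    linarith
  have hq' : ((n:ℝ)-2) * (n-3).choose (k-3) = (k-2) * (n-2).choose (k-2) := by
    have : (((n-2 : ℕ):ℝ)) * (n-3).choose (k-3) = ((k-2:ℕ):ℝ) * (n-2).choose (k-2) := by
      exact_mod_cast hqx
    rwa [Nat.cast_sub (by omega), Nat.cast_sub (by omega)] at this
  have h2' : ((n-2).choose (k-2) : ℝ) ≤ (n-m-1).choose (k-2) + (m-1) * (n-3).choose (k-3) := by
    have : ((n-2).choose (k-2) : ℝ) ≤ (n-m-1).choose (k-2) + ((m-1:ℕ):ℝ) * (n-3).choose (k-3) := by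
      exact_mod_cast h2
    rwa [Nat.cast_sub (by omega), Nat.cast_one] at this
  have h3' : (m.choose k : ℝ) * k.choose 3 ≤ m.choose 3 * (n-3).choose (k-3) := by
    exact_mod_cast h3
  have goal : (m.choose 2 : ℝ) * (n-3).choose (k-3) + m.choose k
      ≤ ((m-k:ℕ):ℝ) * (n-m-1).choose (k-2) := by
    rw [Nat.cast_sub (by omega)]
    have hX' : (0:ℝ) < (n-3).choose (k-3) := by exact_mod_cast hX
    have hc' : (0:ℝ) < k.choose 3 := by exact_mod_cast hc
    have hk' : (3:ℝ) ≤ k := by exact_mod_cast hk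
    have hm' : (k:ℝ)+1 ≤ m := by exact_mod_cast hm
    generalize ((n-3).choose (k-3) : ℝ) = X at *
    generalize ((n-2).choose (k-2) : ℝ) = Q at *
    generalize ((n-m-1).choose (k-2) : ℝ) = R at *
    generalize (k.choose 3 : ℝ) = c at *
    generalize (m.choose 3 : ℝ) = b at *
    generalize (m.choose 2 : ℝ) = a at *
    generalize (m.choose k : ℝ) = g at *
    generalize (k:ℝ) = K at *
    generalize (m:ℝ) = M at *
    generalize (n:ℝ) = N at *
    have p1 := mul_le_mul_of_nonneg_right hp hX'.le
    have p2 := mul_le_mul_of_nonneg_left h3' (show 0 ≤ K-2 by linarith)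
    have p3 := mul_le_mul_of_nonneg_left h2' (show 0 ≤ (M-K)*c*(K-2) from
      mul_nonneg (mul_nonneg (by linarith) hc'.le) (by linarith))
    have p4 : (M-K)*c*((N-2)*X) = (M-K)*c*((K-2)*Q) := by rw [hq']
    have : (c*(K-2)) * (a * X + g) ≤ (c*(K-2)) * ((M-K)*R) := by linarith
    exact le_of_mul_le_mul_left this (mul_pos hc' (by linarith))
  exact_mod_cast goal

theorem numF1 (n k m : ℕ) (hk : 3 ≤ k) (hn : 3 * k * (2 * k).choose k ≤ n)
    (hm2 : m ≤ 2*k^2+6) : k * m + m + k ≤ n := by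
  have : k * m + m + k ≤ k * (2*k^2+6) + (2*k^2+6) + k := by gcongr
  refine le_trans this ?_
  rcases n_cases n k hk hn with ⟨rfl, h⟩ | ⟨rfl, h⟩ | ⟨h5, h⟩
  · omega
  · omega
  · refine le_trans ?_ h
    obtain ⟨t, rfl⟩ := Nat.exists_eq_add_of_le h5
    ring_nf
    nlinarith [Nat.zero_le t, Nat.zero_le (t^2), Nat.zero_le (t^3), Nat.zero_le (t^4), Nat.zero_le (t^5)]

theorem numC (n k : ℕ) (hk : 3 ≤ k) (hn : 3 * k * (2 * k).choose k ≤ n) :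
    (2*k).choose k + 2 * k ≤ n := by
  have h1 : 1 ≤ (2*k).choose k := Nat.choose_pos (by omega)
  nlinarith
open Finset

theorem three_sets {n k : ℕ} {F : Finset (Finset (Fin n))} (hci : CondIntersecting 3 (2 * k) F)
    {A B C : Finset (Fin n)} (hA : A ∈ F) (hB : B ∈ F) (hC : C ∈ F) (hAB : A ≠ B) (hAC : A ≠ C)
    (hBC : B ≠ C) (hu : (A ∪ B ∪ C).card ≤ 2 * k) : (A ∩ B ∩ C).Nonempty := by
  by_contra h
  rw [not_nonempty_iff_eq_empty] at h
  apply hci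
  refine ⟨{A, B, C}, ?_, ?_, ?_, ?_⟩
  · intro x hx
    simp only [mem_insert, mem_singleton] at hx
    rcases hx with rfl | rfl | rfl <;> assumption
  · exact card_eq_three.mpr ⟨A, B, C, hAB, hAC, hBC, rfl⟩
  · simpa [union_assoc] using hu
  · simpa [inter_assoc] using h

theorem card_between {n k : ℕ} (T Y : Finset (Fin n)) (hd : Disjoint T Y) (hT : T.card ≤ k) :
    #{D ∈ powersetCard k (univ : Finset (Fin n)) | T ⊆ D ∧ Disjoint D Y}
      = (n - T.card - Y.card).choose (k - T.card) := by
  have h1 : #((T ∪ Y)ᶜ) = n - T.card - Y.card := by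
    rw [card_compl, card_union_of_disjoint hd, Fintype.card_fin, Nat.sub_sub]
  rw [← h1, ← card_powersetCard]
  symm
  apply card_bij (fun U _ => T ∪ U)
  · intro U hU
    rw [mem_powersetCard] at hU
    have hTU : Disjoint T U := by
      rw [Finset.disjoint_left]; intro a ha hb
      have := hU.1 hb; simp [ha] at this
    simp only [mem_filter, mem_powersetCard, subset_univ, true_and]
    refine ⟨?_, subset_union_left, ?_⟩
    · rw [card_union_of_disjoint hTU, hU.2]; omega
    · rw [disjoint_union_left]
      refine ⟨hd, ?_⟩
      rw [Finset.disjoint_left]; intro a ha hb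
      have := hU.1 ha; simp [hb] at this
  · intro U hU V hV h
    rw [mem_powersetCard] at hU hV
    have key : ∀ W : Finset (Fin n), W ⊆ (T ∪ Y)ᶜ → (T ∪ W) \ T = W := by
      intro W hW
      apply union_sdiff_cancel_left
      rw [Finset.disjoint_left]; intro a ha hb
      have := hW hb; simp [ha] at this
    rw [← key U hU.1, ← key V hV.1]
    exact congrArg (· \ T) h
  · intro D hD
    simp only [mem_filter, mem_powersetCard, subset_univ, true_and] at hD
    refine ⟨D \ T, ?_, ?_⟩
    · rw [mem_powersetCard]
      refine ⟨?_, by rw [card_sdiff_of_subset hD.2.1, hD.1]⟩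
      intro a ha
      rw [mem_sdiff] at ha
      simp only [mem_compl, mem_union, not_or]
      exact ⟨ha.2, fun h => (Finset.disjoint_left.mp hD.2.2) ha.1 h⟩
    · exact union_sdiff_of_subset hD.2.1

theorem card_sup_le {n k : ℕ} {F : Finset (Finset (Fin n))} (hunif : ∀ S ∈ F, S.card = k)
    (T : Finset (Fin n)) (hT : T.card ≤ k) :
    #{A ∈ F | T ⊆ A} ≤ (n - T.card).choose (k - T.card) := by
  have := card_between (k := k) T ∅ (disjoint_empty_right T) hT
  rw [card_empty, Nat.sub_zero] at this
  rw [← this]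
  apply card_le_card
  intro A hA
  rw [mem_filter] at hA
  simp [hA.2, hunif A hA.1]

/-- Case of one set avoiding `x`. -/
theorem star_single {n k : ℕ} (hk : 3 ≤ k) (hn : (2 * k).choose k + 2 * k ≤ n)
    {F : Finset (Finset (Fin n))} (hunif : ∀ S ∈ F, S.card = k)
    (hci : CondIntersecting 3 (2 * k) F) (x : Fin n) (A : Finset (Fin n)) (hA : A ∈ F)
    (hx : x ∉ A) : #{B ∈ F | x ∈ B} ≤ (n - k - 1).choose (k - 1) := by
  classical
  set P := {D ∈ powersetCard k (univ : Finset (Fin n)) | {x} ⊆ D ∧ Disjoint D A} with hP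
  have hPc : #P = (n - k - 1).choose (k - 1) := by
    rw [hP, card_between {x} A (by simpa using hx) (by simp; omega), card_singleton, hunif A hA]
    congr 1; omega
  set S := {B ∈ F | x ∈ B ∧ ¬ Disjoint B A} with hS
  set L := P \ F with hL
  have hcount : #S * (n - 2 * k + 1) ≤ #L * (2 * k).choose k := by
    apply card_mul_le_card_mul (fun B D => B ⊆ A ∪ D)
    · intro B hB
      rw [hS, mem_filter] at hB
      obtain ⟨hBF, hxB, hBA⟩ := hB
      have hBk := hunif B hBF
      have hinter : 1 ≤ #(B ∩ A) := by
        rw [Nat.succ_le_iff, card_pos]; rwa [← not_disjoint_iff_nonempty_inter]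
      have hsum : #(B \ A) + #(B ∩ A) = k := by rw [card_sdiff_add_card_inter, hBk]
      have h2 := card_between (k := k) (B \ A) A sdiff_disjoint (by omega)
      have h3 : {D ∈ powersetCard k (univ : Finset (Fin n)) | B \ A ⊆ D ∧ Disjoint D A} ⊆
          L.bipartiteAbove (fun B D => B ⊆ A ∪ D) B := by
        intro D hD
        simp only [mem_filter, mem_powersetCard, subset_univ, true_and] at hD
        obtain ⟨hDk, hBD, hDA⟩ := hD
        have hBAD : B ⊆ A ∪ D := by
          intro a ha
          by_cases h : a ∈ A
          · simp [h]
          · simp [hBD (mem_sdiff.mpr ⟨ha, h⟩)]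
        rw [mem_bipartiteAbove]
        refine ⟨?_, hBAD⟩
        rw [hL, mem_sdiff, hP]
        refine ⟨?_, ?_⟩
        · simp only [mem_filter, mem_powersetCard, subset_univ, true_and, singleton_subset_iff]
          exact ⟨hDk, hBD (mem_sdiff.mpr ⟨hxB, hx⟩), hDA⟩
        · intro hDF
          have hne := three_sets hci hA hBF hDF (by rintro rfl; exact hx hxB)
            (by rintro rfl; exact hx (hBD (mem_sdiff.mpr ⟨hxB, hx⟩)))
            (by rintro rfl; exact hBA hDA) (by
              have : A ∪ B ∪ D ⊆ A ∪ D := by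
                intro a ha; simp only [mem_union] at ha ⊢
                rcases ha with (h | h) | h
                · exact Or.inl h
                · simpa using hBAD h
                · exact Or.inr h
              refine (card_le_card this).trans ((card_union_le _ _).trans ?_)
              rw [hunif A hA, hDk]; omega)
          obtain ⟨a, ha⟩ := hne
          simp only [mem_inter] at ha
          exact Finset.disjoint_left.mp hDA ha.2 ha.1.1
      refine le_trans ?_ (card_le_card h3)
      rw [h2, hunif A hA]
      have e1 : k - #(B \ A) = #(B ∩ A) := by omega
      rw [e1]
      obtain ⟨s, hs⟩ := Nat.exists_eq_add_of_le hinter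
      have hsk : s + 1 ≤ k := by omega
      have e2 : n - #(B \ A) - k = n - 2 * k + (s + 1) := by omega
      rw [e2, hs, add_comm 1 s]
      calc n - 2 * k + 1 = (n - 2 * k + 1).choose 1 := by simp
        _ ≤ _ := by
          rw [show n - 2*k + 1 = n - 2 * k + 1 from rfl,
            ← Nat.choose_symm_of_eq_add (show n - 2*k+1 = (n - 2*k) + 1 from rfl),
            ← Nat.choose_symm_of_eq_add (show n - 2*k+(s+1) = (n - 2*k) + (s+1) from rfl)]
          exact Nat.choose_le_choose _ (by omega)
    · intro D hD
      rw [hL, mem_sdiff, hP, mem_filter, mem_powersetCard] at hD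
      have : (S.bipartiteBelow (fun B D => B ⊆ A ∪ D) D) ⊆ powersetCard k (A ∪ D) := by
        intro B hB
        rw [mem_bipartiteBelow, hS, mem_filter] at hB
        rw [mem_powersetCard]
        exact ⟨hB.2, hunif B hB.1.1⟩
      refine (card_le_card this).trans ?_
      rw [card_powersetCard]
      apply Nat.choose_le_choose
      refine (card_union_le _ _).trans ?_
      rw [hunif A hA, hD.1.1.2]; omega
  have hSL : #S ≤ #L := by
    have hpos : 0 < (2*k).choose k := Nat.choose_pos (by omega)
    by_contra! h
    have : #L * (2*k).choose k < #S * (n - 2 * k + 1) :=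
      Nat.mul_lt_mul_of_lt_of_le h (by omega) (by omega)
    omega
  have hsub : {B ∈ F | x ∈ B} ⊆ S ∪ (P ∩ F) := by
    intro B hB
    rw [mem_filter] at hB
    rw [mem_union, mem_inter, hS, hP]
    by_cases h : Disjoint B A
    · right
      refine ⟨?_, hB.1⟩
      simp [hunif B hB.1, hB.2, h]
    · left; simp [hB, h]
  have h1 := card_le_card hsub
  have h2 := card_union_le S (P ∩ F)
  have h3 : #L + #(P ∩ F) = #P := card_sdiff_add_card_inter _ _
  rw [← hPc]; omega

/-- Case of general `Y`. -/
theorem star_many {n k m : ℕ} (hk : 3 ≤ k) 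
    {F : Finset (Finset (Fin n))} (hunif : ∀ S ∈ F, S.card = k)
    (hci : CondIntersecting 3 (2 * k) F) (x : Fin n) (Y : Finset (Fin n)) (hxY : x ∉ Y)
    (hm : #Y = m) (hn : k * m + m + k ≤ n)
    (hsub : ∀ A ∈ F, x ∉ A → A ⊆ Y) (hcov : ∀ y ∈ Y, ∃ A ∈ F, x ∉ A ∧ y ∈ A) :
    #F ≤ (n - m - 1).choose (k - 1) + m.choose 2 * (n-3).choose (k-3) + m.choose k := by
  classical
  set P := {D ∈ powersetCard k (univ : Finset (Fin n)) | {x} ⊆ D ∧ Disjoint D Y} with hP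
  have hPc : #P = (n - m - 1).choose (k - 1) := by
    rw [hP, card_between {x} Y (by simpa using hxY) (by simp; omega), card_singleton, hm]
    congr 1; omega
  set S := {B ∈ F | x ∈ B ∧ #(B ∩ Y) = 1} with hS
  set L := P \ F with hL
  have hcount : #S * (k * m) ≤ #L * (k * m) := by
    apply card_mul_le_card_mul (fun B D => B \ Y ⊆ D)
    · intro B hB
      rw [hS, mem_filter] at hB
      obtain ⟨hBF, hxB, hBY⟩ := hB
      have hBk := hunif B hBF
      have hsum : #(B \ Y) + #(B ∩ Y) = k := by rw [card_sdiff_add_card_inter, hBk]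
      obtain ⟨y, hy⟩ := card_eq_one.mp hBY
      have hyBY : y ∈ B ∩ Y := by rw [hy]; simp
      rw [mem_inter] at hyBY
      obtain ⟨A, hA, hxA, hyA⟩ := hcov y hyBY.2
      have hAY := hsub A hA hxA
      have h2 := card_between (k := k) (B \ Y) Y sdiff_disjoint (by omega)
      have h3 : {D ∈ powersetCard k (univ : Finset (Fin n)) | B \ Y ⊆ D ∧ Disjoint D Y} ⊆
          L.bipartiteAbove (fun B D => B \ Y ⊆ D) B := by
        intro D hD
        simp only [mem_filter, mem_powersetCard, subset_univ, true_and] at hD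
        obtain ⟨hDk, hBD, hDY⟩ := hD
        have hBAD : B ⊆ A ∪ D := by
          intro a ha
          by_cases h : a ∈ Y
          · have : a ∈ B ∩ Y := mem_inter.mpr ⟨ha, h⟩
            rw [hy, mem_singleton] at this
            simp [this, hyA]
          · simp [hBD (mem_sdiff.mpr ⟨ha, h⟩)]
        have hxD := hBD (mem_sdiff.mpr ⟨hxB, hxY⟩)
        rw [mem_bipartiteAbove]
        refine ⟨?_, hBD⟩
        rw [hL, mem_sdiff, hP]
        refine ⟨?_, ?_⟩
        · simp only [mem_filter, mem_powersetCard, subset_univ, true_and, singleton_subset_iff]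
          exact ⟨hDk, hxD, hDY⟩
        · intro hDF
          have hne := three_sets hci hA hBF hDF (by rintro rfl; exact hxA hxB)
            (by rintro rfl; exact hxA hxD)
            (by rintro rfl; exact Finset.disjoint_left.mp hDY hyBY.1 hyBY.2) (by
              have : A ∪ B ∪ D ⊆ A ∪ D := by
                intro a ha; simp only [mem_union] at ha ⊢
                rcases ha with (h | h) | h
                · exact Or.inl h
                · simpa using hBAD h
                · exact Or.inr h
              refine (card_le_card this).trans ((card_union_le _ _).trans ?_)
              rw [hunif A hA, hDk]; omega)
          obtain ⟨a, ha⟩ := hne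
          simp only [mem_inter] at ha
          exact Finset.disjoint_left.mp hDY ha.2 (hAY ha.1.1)
      refine le_trans ?_ (card_le_card h3)
      rw [h2, hm]
      have e1 : k - #(B \ Y) = 1 := by omega
      rw [e1, Nat.choose_one_right]
      omega
    · intro D hD
      rw [hL, mem_sdiff, hP, mem_filter, mem_powersetCard] at hD
      have hDk := hD.1.1.2
      have hDY := hD.1.2.2
      have : (S.bipartiteBelow (fun B D => B \ Y ⊆ D) D) ⊆
          (D ×ˢ Y).image (fun p => insert p.2 (D.erase p.1)) := by
        intro B hB
        rw [mem_bipartiteBelow, hS, mem_filter] at hB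
        obtain ⟨⟨hBF, hxB, hBY⟩, hBD⟩ := hB
        have hBk := hunif B hBF
        have hsum : #(B \ Y) + #(B ∩ Y) = k := by rw [card_sdiff_add_card_inter, hBk]
        obtain ⟨y, hy⟩ := card_eq_one.mp hBY
        have hyBY : y ∈ B ∩ Y := by rw [hy]; simp
        have h1 : #(D \ (B \ Y)) = 1 := by rw [card_sdiff_of_subset hBD]; omega
        obtain ⟨d, hd⟩ := card_eq_one.mp h1
        rw [mem_image]
        refine ⟨(d, y), ?_, ?_⟩
        · rw [mem_product]
          refine ⟨?_, (mem_inter.mp hyBY).2⟩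
          have : d ∈ D \ (B \ Y) := by rw [hd]; simp
          exact (mem_sdiff.mp this).1
        · have e1 : D.erase d = B \ Y := by
            rw [← sdiff_singleton_eq_erase, ← hd, Finset.sdiff_sdiff_eq_self hBD]
          simp only [e1]
          rw [insert_eq, ← hy, union_comm, sdiff_union_inter]
      refine (card_le_card this).trans (card_image_le.trans ?_)
      rw [card_product, hDk, hm]
  by_cases hm0 : m = 0
  · -- then every member contains x
    subst hm0
    rw [card_eq_zero] at hm
    have : F ⊆ P := by
      intro A hA
      have hxA : x ∈ A := by
        by_contra h
        have := hsub A hA h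
        rw [hm, subset_empty] at this
        have h3 := hunif A hA
        rw [this, card_empty] at h3
        omega
      simp [hP, hunif A hA, hxA, hm]
    have := card_le_card this
    omega
  have hSL : #S ≤ #L := Nat.le_of_mul_le_mul_right hcount (by positivity)
  set S2 := {B ∈ F | x ∈ B ∧ 2 ≤ #(B ∩ Y)} with hS2
  have hS2c : #S2 ≤ m.choose 2 * (n-3).choose (k-3) := by
    have : S2 ⊆ (powersetCard 2 Y).biUnion (fun p => {A ∈ F | insert x p ⊆ A}) := by
      intro B hB
      rw [hS2, mem_filter] at hB
      obtain ⟨p, hp, hp2⟩ := exists_subset_card_eq hB.2.2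
      rw [mem_biUnion]
      refine ⟨p, ?_, ?_⟩
      · rw [mem_powersetCard]; exact ⟨hp.trans inter_subset_right, hp2⟩
      · rw [mem_filter, insert_subset_iff]
        exact ⟨hB.1, hB.2.1, hp.trans inter_subset_left⟩
    refine (card_le_card this).trans ?_
    have := card_biUnion_le_card_mul (powersetCard 2 Y) (fun p => {A ∈ F | insert x p ⊆ A})
      ((n-3).choose (k-3)) (by
        intro p hp
        rw [mem_powersetCard] at hp
        have h3 : #(insert x p) = 3 := by
          rw [card_insert_of_notMem (fun h => hxY (hp.1 h)), hp.2]
        have := card_sup_le hunif (insert x p) (by omega)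
        rwa [h3] at this)
    rwa [card_powersetCard, hm] at this
  set G := {A ∈ F | x ∉ A} with hG
  have hGc : #G ≤ m.choose k := by
    rw [← hm, ← card_powersetCard]
    apply card_le_card
    intro A hA
    rw [hG, mem_filter] at hA
    rw [mem_powersetCard]
    exact ⟨hsub A hA.1 hA.2, hunif A hA.1⟩
  have hsub' : F ⊆ ((S ∪ (P ∩ F)) ∪ S2) ∪ G := by
    intro B hB
    simp only [mem_union, mem_inter, hS, hP, hS2, hG, mem_filter, mem_powersetCard,
      subset_univ, true_and, singleton_subset_iff, hunif B hB, hB, and_true]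
    by_cases hxB : x ∈ B
    · simp only [hxB, true_and, not_true, or_false]
      rcases (by omega : #(B ∩ Y) = 0 ∨ #(B ∩ Y) = 1 ∨ 2 ≤ #(B ∩ Y)) with h | h | h
      · left; right; rw [card_eq_zero] at h; exact disjoint_iff_inter_eq_empty.mpr h
      · left; left; exact h
      · right; exact h
    · right; exact hxB
  have h1 := card_le_card hsub'
  have h2 := card_union_le ((S ∪ (P ∩ F)) ∪ S2) G
  have h2' := card_union_le (S ∪ (P ∩ F)) S2
  have h2'' := card_union_le S (P ∩ F)
  have h3 : #L + #(P ∩ F) = #P := card_sdiff_add_card_inter _ _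
  rw [← hPc]; omega

/-- Members of `F` through `z` that meet every member through `z` in a further point. -/
noncomputable def nonCenter {n : ℕ} (F : Finset (Finset (Fin n))) (z : Fin n) :
    Finset (Finset (Fin n)) := by
  classical exact {A ∈ F | z ∈ A ∧ ∀ B ∈ F, A ∩ B ≠ {z}}

theorem mem_nonCenter {n : ℕ} {F : Finset (Finset (Fin n))} {z : Fin n} {A : Finset (Fin n)} :
    A ∈ nonCenter F z ↔ A ∈ F ∧ z ∈ A ∧ ∀ B ∈ F, A ∩ B ≠ {z} := by
  simp [nonCenter]

theorem own_count {n k : ℕ} (hk : 3 ≤ k)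
    {F : Finset (Finset (Fin n))} (hunif : ∀ S ∈ F, S.card = k)
    (hci : CondIntersecting 3 (2 * k) F) :
    k * #F ≤ n.choose (k-1) + ∑ z : Fin n, #(nonCenter F z) := by
  classical
  have h1 : k * #F = ∑ z : Fin n, #{A ∈ F | z ∈ A} := by
    have := sum_card_bipartiteAbove_eq_sum_card_bipartiteBelow (s := F)
      (t := (univ : Finset (Fin n))) (fun A z => z ∈ A)
    simp only [bipartiteAbove, bipartiteBelow] at this
    rw [← this]
    rw [sum_congr rfl (g := fun _ => k), sum_const, smul_eq_mul, mul_comm]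
    intro A hA
    rw [← hunif A hA]; congr 1; ext; simp
  have h2 : ∀ z : Fin n, #{A ∈ F | z ∈ A} ≤
      #{A ∈ F | z ∈ A ∧ ∃ B ∈ F, A ∩ B = {z}} + #(nonCenter F z) := by
    intro z
    refine le_trans (card_le_card ?_) (card_union_le _ _)
    intro A hA
    rw [mem_filter] at hA
    rw [mem_union, mem_filter, mem_nonCenter]
    by_cases h : ∃ B ∈ F, A ∩ B = {z}
    · left; exact ⟨hA.1, hA.2, h⟩
    · right; push Not at h; exact ⟨hA.1, hA.2, h⟩
  have h3 : ∑ z : Fin n, #{A ∈ F | z ∈ A ∧ ∃ B ∈ F, A ∩ B = {z}} ≤ n.choose (k-1) := by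
    rw [← card_sigma]
    have : n.choose (k-1) = #(powersetCard (k-1) (univ : Finset (Fin n))) := by simp
    rw [this]
    apply card_le_card_of_injOn (fun p => p.2.erase p.1)
    · rintro ⟨z, A⟩ hp
      simp only [coe_sigma, Set.mem_sigma_iff, mem_coe, mem_filter] at hp
      simp only [mem_coe, mem_powersetCard, subset_univ, true_and]
      rw [card_erase_of_mem hp.2.2.1, hunif A hp.2.1]
    · rintro ⟨z, A⟩ hp ⟨z', A'⟩ hp' heq
      simp only [coe_sigma, Set.mem_sigma_iff, mem_coe, mem_filter] at hp hp'
      obtain ⟨-, hA, hzA, B, hB, hAB⟩ := hp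
      obtain ⟨-, hA', hzA', -⟩ := hp'
      simp only at heq
      have hsub : A.erase z ⊆ A' := by rw [heq]; exact erase_subset _ _
      have hAA : A = A' := by
        by_contra hne
        have hz : z ∉ A' := by
          intro hz
          apply hne
          apply eq_of_subset_of_card_le
          · intro a ha
            by_cases h : a = z
            · rw [h]; exact hz
            · exact hsub (mem_erase.mpr ⟨h, ha⟩)
          · rw [hunif A hA, hunif A' hA']
        have hzB : z ∈ B := by
          have : z ∈ A ∩ B := by rw [hAB]; simp
          exact (mem_inter.mp this).2
        have hne2 : A ≠ B := by
          rintro rfl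
          rw [inter_self] at hAB
          have := hunif A hA
          rw [hAB, card_singleton] at this; omega
        have hcard : #(A ∪ B ∪ A') ≤ 2 * k := by
          have e : A ∪ B ∪ A' ⊆ (B.erase z) ∪ insert z A' := by
            intro a ha
            simp only [mem_union, mem_erase, mem_insert] at ha ⊢
            by_cases haz : a = z
            · simp [haz]
            · rcases ha with (h | h) | h
              · right; right; exact hsub (mem_erase.mpr ⟨haz, h⟩)
              · left; exact ⟨haz, h⟩
              · right; right; exact h
          refine (card_le_card e).trans ((card_union_le _ _).trans ?_)
          rw [card_erase_of_mem hzB, card_insert_of_notMem hz, hunif B hB, hunif A' hA']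
          omega
        obtain ⟨a, ha⟩ := three_sets hci hA hB hA' hne2 hne (by rintro rfl; exact hz hzB) hcard
        rw [hAB, mem_inter, mem_singleton] at ha
        exact hz (ha.1 ▸ ha.2)
      subst hAA
      have : z = z' := by
        by_contra hne
        have : z ∈ A.erase z' := mem_erase.mpr ⟨hne, hzA⟩
        rw [← heq] at this
        simp at this
      subst this
      rfl
  calc k * #F = _ := h1
    _ ≤ _ := sum_le_sum (fun z _ => h2 z)
    _ = _ := sum_add_distrib
    _ ≤ _ := Nat.add_le_add_right h3 _

theorem good_of_large {n k : ℕ} (hk : 3 ≤ k)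
    {F : Finset (Finset (Fin n))} (hunif : ∀ S ∈ F, S.card = k) (z : Fin n)
    (h : (k-1)^2 * (n-3).choose (k-3) < #(nonCenter F z)) :
    ∃ x, x ≠ z ∧ ∀ A ∈ F, z ∈ A → x ∈ A := by
  classical
  by_contra! hcon
  have hne : (nonCenter F z).Nonempty := by
    rw [← card_pos]; omega
  obtain ⟨A₁, hA₁⟩ := hne
  rw [mem_nonCenter] at hA₁
  have hch : ∀ a : Fin n, ∃ B, a ≠ z → B ∈ F ∧ z ∈ B ∧ a ∉ B := by
    intro a
    by_cases ha : a = z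
    · exact ⟨∅, fun h => absurd ha h⟩
    · obtain ⟨B, h1, h2, h3⟩ := hcon a ha
      exact ⟨B, fun _ => ⟨h1, h2, h3⟩⟩
  choose Bf hBf using hch
  have other : ∀ A ∈ nonCenter F z, ∀ B ∈ F, z ∈ B → ∃ b ∈ B.erase z, b ∈ A := by
    intro A hA B hB hzB
    rw [mem_nonCenter] at hA
    by_contra! hno
    apply hA.2.2 B hB
    ext a
    simp only [mem_inter, mem_singleton]
    constructor
    · rintro ⟨h1, h2⟩
      by_contra haz
      exact hno a (mem_erase.mpr ⟨haz, h2⟩) h1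
    · rintro rfl; exact ⟨hA.2.1, hzB⟩
  have hsub : nonCenter F z ⊆
      (A₁.erase z).biUnion (fun a => ((Bf a).erase z).biUnion (fun b => 
        {A ∈ F | {z, a, b} ⊆ A})) := by
    intro A hA
    obtain ⟨a, ha, haA⟩ := other A hA A₁ hA₁.1 hA₁.2.1
    have haz : a ≠ z := (mem_erase.mp ha).1
    obtain ⟨b, hb, hbA⟩ := other A hA (Bf a) (hBf a haz).1 (hBf a haz).2.1
    rw [mem_nonCenter] at hA
    rw [mem_biUnion]
    refine ⟨a, ha, ?_⟩
    rw [mem_biUnion]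
    refine ⟨b, hb, ?_⟩
    rw [mem_filter]
    refine ⟨hA.1, ?_⟩
    intro c hc
    simp only [mem_insert, mem_singleton] at hc
    rcases hc with rfl | rfl | rfl
    · exact hA.2.1
    · exact haA
    · exact hbA
  have hc1 : #(A₁.erase z) = k - 1 := by
    rw [card_erase_of_mem hA₁.2.1, hunif _ hA₁.1]
  have hle : #(nonCenter F z) ≤ #(A₁.erase z) * ((k-1) * (n-3).choose (k-3)) := by
    refine (card_le_card hsub).trans ?_
    apply card_biUnion_le_card_mul
    intro a ha
    have haz : a ≠ z := (mem_erase.mp ha).1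
    have hc2 : #((Bf a).erase z) = k - 1 := by
      rw [card_erase_of_mem (hBf a haz).2.1, hunif _ (hBf a haz).1]
    rw [← hc2]
    apply card_biUnion_le_card_mul
    intro b hb
    have hbz : b ≠ z := (mem_erase.mp hb).1
    have hba : b ≠ a := by
      rintro rfl; exact (hBf b haz).2.2 (mem_erase.mp hb).2
    have h3 : #({z, a, b} : Finset (Fin n)) = 3 :=
      card_eq_three.mpr ⟨z, a, b, haz.symm, hbz.symm, hba.symm, rfl⟩
    have := card_sup_le hunif {z, a, b} (by omega)
    rwa [h3] at this
  rw [hc1] at hle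
  have : (k-1) * ((k-1) * (n-3).choose (k-3)) = (k-1)^2 * (n-3).choose (k-3) := by ring
  omega

set_option maxHeartbeats 1000000 in
theorem stage_one {n k : ℕ} (hk : 3 ≤ k) (hn : 3 * k * (2 * k).choose k ≤ n)
    {F : Finset (Finset (Fin n))} (hunif : ∀ S ∈ F, S.card = k)
    (hci : CondIntersecting 3 (2 * k) F) (hF : (n-k-1).choose (k-1) ≤ #F) :
    ∃ x : Fin n, ∃ Y : Finset (Fin n), #Y ≤ 2*k^2+6 ∧ x ∉ Y ∧ ∀ A ∈ F, x ∉ A → A ⊆ Y := by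
  classical
  have hb := n_big n k hk hn
  have hM := numM n k hk hn
  have hA := numA n k (#F) hk hb hF
  have hX := numX n k hk (by omega)
  have hqx := numQX n k hk (by omega)
  have hown := own_count hk hunif hci
  set X := (n-3).choose (k-3) with hXdef
  set Q := (n-2).choose (k-2) with hQdef
  set M := (k-1)^2 * X with hMdef
  have hXM : X ≤ M := by
    have : 1 ≤ (k-1)^2 := Nat.one_le_pow _ _ (by omega)
    nlinarith
  -- general bound on links
  have hFz : ∀ z x : Fin n, x ≠ z → (∀ A ∈ F, z ∈ A → x ∈ A) → #{A ∈ F | z ∈ A} ≤ Q := by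
    intro z x hxz h
    have h2 : #({z, x} : Finset (Fin n)) = 2 := card_pair hxz.symm
    have := card_sup_le hunif {z, x} (by omega)
    rw [h2] at this
    refine le_trans (card_le_card ?_) this
    intro A hA
    rw [mem_filter] at hA ⊢
    refine ⟨hA.1, ?_⟩
    intro c hc
    simp only [mem_insert, mem_singleton] at hc
    rcases hc with rfl | rfl
    · exact hA.2
    · exact h A hA.1 hA.2
  have hNF : ∀ z, #(nonCenter F z) ≤ #{A ∈ F | z ∈ A} := by
    intro z
    apply card_le_card
    intro A hA
    rw [mem_nonCenter] at hA
    rw [mem_filter]; exact ⟨hA.1, hA.2.1⟩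
  clear_value M X Q
  -- bad points
  set Bad : Finset (Fin n) := {z : Fin n | #(nonCenter F z) ≤ M} with hBad
  have hgood : ∀ z, z ∉ Bad → ∃ x, x ≠ z ∧ ∀ A ∈ F, z ∈ A → x ∈ A := by
    intro z hz
    rw [hBad, mem_filter] at hz
    exact good_of_large hk hunif z (by rw [← hXdef, ← hMdef]; simpa using hz)
  have hsum : n * Q ≤ (k^2+3) * Q + ∑ z : Fin n, #(nonCenter F z) := by omega
  have hbadc : #Bad ≤ k^2+3 := by
    by_contra! hcon
    have h1 : ∑ z : Fin n, (#(nonCenter F z) + if z ∈ Bad then Q - M else 0) ≤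
        ∑ z : Fin n, Q := by
      apply sum_le_sum
      intro z _
      split_ifs with h
      · have : #(nonCenter F z) ≤ M := by rw [hBad, mem_filter] at h; exact h.2
        have : M ≤ Q := by nlinarith
        omega
      · obtain ⟨x, hxz, hx⟩ := hgood z h
        have := hFz z x hxz hx
        have := hNF z
        omega
    rw [sum_add_distrib, sum_const, card_univ, Fintype.card_fin, smul_eq_mul, ← sum_filter,
      sum_const, smul_eq_mul, filter_mem_eq_inter, univ_inter] at h1
    have hMQ : M ≤ Q := by nlinarith
    obtain ⟨e, he⟩ := Nat.exists_eq_add_of_le hMQ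
    have he' : Q - M = e := by omega
    rw [he'] at h1
    have h2 : (k^2+4) * e ≤ #Bad * e := Nat.mul_le_mul_right _ hcon
    have h3 : (k^2+4) * e ≤ (k^2+3) * Q := by omega
    have h5 : (k^2+4) * Q = (k^2+4) * M + (k^2+4) * e := by rw [he]; ring
    linarith
  -- a point with large link
  obtain ⟨z, hz⟩ : ∃ z : Fin n, n * Q ≤ (k^2+3) * Q + n * #(nonCenter F z) := by
    by_contra! hcon
    have hn0 : (univ : Finset (Fin n)).Nonempty := ⟨⟨0, by omega⟩, mem_univ _⟩
    have h1 : ∑ z : Fin n, ((k^2+3) * Q + n * #(nonCenter F z)) < ∑ z : Fin n, n * Q :=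
      sum_lt_sum_of_nonempty hn0 (fun z _ => hcon z)
    rw [sum_add_distrib, sum_const, sum_const, card_univ, Fintype.card_fin, smul_eq_mul,
      smul_eq_mul, ← mul_sum, ← mul_add] at h1
    have := Nat.lt_of_mul_lt_mul_left h1
    omega
  have hpoly := poly_one n k hk hn
  have hkn : k^2 + 4 + 2 < n := by
    have : (k^2+4) * 1 ≤ (k^2+4) * ((k-1)^2 * (k-2)) :=
      Nat.mul_le_mul_left _ (Nat.mul_pos (pow_pos (by omega) 2) (by omega))
    omega
  have hzgood : z ∉ Bad := by
    intro h
    rw [hBad, mem_filter] at h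
    have h1 : n * Q ≤ (k^2+3) * Q + n * M := le_trans hz (by
      have := Nat.mul_le_mul_left n h.2
      omega)
    have h2 : n * ((k^2+4) * M) ≤ n * Q := Nat.mul_le_mul_left _ hM.le
    have h3 : (k^2+4) * (n * Q) ≤ (k^2+4) * ((k^2+3) * Q) + n * Q := by
      calc (k^2+4) * (n * Q) ≤ (k^2+4) * ((k^2+3) * Q + n * M) := Nat.mul_le_mul_left _ h1
        _ = (k^2+4) * ((k^2+3) * Q) + n * ((k^2+4) * M) := by ring
        _ ≤ _ := Nat.add_le_add_left h2 _
    have hQ : 0 < Q := by omega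
    have h4 : (k^2+4) * n ≤ (k^2+4) * (k^2+3) + n := by
      apply Nat.le_of_mul_le_mul_right _ hQ
      calc (k^2+4) * n * Q = (k^2+4) * (n * Q) := by ring
        _ ≤ _ := h3
        _ = _ := by ring
    have h5 : (k^2+3) * n ≤ (k^2+3) * (k^2+4) := by
      have e1 : (k^2+4) * n = (k^2+3) * n + n := by ring
      have e2 : (k^2+4) * (k^2+3) = (k^2+3) * (k^2+4) := by ring
      omega
    have h6 := Nat.le_of_mul_le_mul_left h5 (by positivity)
    omega
  obtain ⟨x, hxz, hx⟩ := hgood z hzgood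
  -- pair degrees
  set d : Fin n → ℕ := fun w => #{A ∈ F | z ∈ A ∧ w ∈ A} with hd
  set W : Finset (Fin n) := (univ.erase z).erase x with hW
  have hWc : #W = n - 2 := by
    rw [hW, card_erase_of_mem (mem_erase.mpr ⟨hxz, mem_univ _⟩), card_erase_of_mem (mem_univ _),
      card_univ, Fintype.card_fin]; omega
  have hdsum : ∑ w ∈ W, d w = (k-2) * #{A ∈ F | z ∈ A} := by
    have := sum_card_bipartiteAbove_eq_sum_card_bipartiteBelow (s := {A ∈ F | z ∈ A})
      (t := W) (fun A w => w ∈ A)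
    simp only [bipartiteAbove, bipartiteBelow, filter_filter] at this
    rw [hd, ← this]
    rw [sum_congr rfl (g := fun _ => k-2), sum_const, smul_eq_mul, mul_comm]
    intro A hA
    rw [mem_filter] at hA
    have e : {w ∈ W | w ∈ A} = (A.erase z).erase x := by
      ext w; simp [hW]; tauto
    rw [e, card_erase_of_mem (mem_erase.mpr ⟨hxz, hx A hA.1 hA.2⟩), card_erase_of_mem hA.2,
      hunif A hA.1]; omega
  have hdle : ∀ w ∈ W, d w ≤ X := by
    intro w hw
    simp only [hW, mem_erase, mem_univ, and_true] at hw
    have h3 : #({z, x, w} : Finset (Fin n)) = 3 :=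
      card_eq_three.mpr ⟨z, x, w, hxz.symm, Ne.symm hw.2, Ne.symm hw.1, rfl⟩
    have := card_sup_le hunif {z, x, w} (by omega)
    rw [h3, ← hXdef] at this
    refine le_trans (card_le_card ?_) this
    intro A hA
    rw [mem_filter] at hA ⊢
    refine ⟨hA.1, ?_⟩
    intro c hc
    simp only [mem_insert, mem_singleton] at hc
    rcases hc with rfl | rfl | rfl
    · exact hA.2.1
    · exact hx A hA.1 hA.2.1
    · exact hA.2.2
  set O := {w ∈ W | (k^2+4) * d w < X} with hO
  have hOc : #O ≤ k^2+3 := by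
    by_contra! hcon
    have h1 : ∑ w ∈ W, ((k^2+4) * d w + if w ∈ O then (k^2+3) * X + 1 else 0) ≤
        ∑ w ∈ W, (k^2+4) * X := by
      apply sum_le_sum
      intro w hw
      have := Nat.mul_le_mul_left (k^2+4) (hdle w hw)
      split_ifs with h
      · rw [hO, mem_filter] at h
        have : (k^2+4) * X = (k^2+3)*X + X := by ring
        omega
      · omega
    have hOW : O ⊆ W := filter_subset _ _
    rw [sum_add_distrib, ← mul_sum, hdsum, sum_const, hWc, smul_eq_mul, ← sum_filter,
      sum_const, smul_eq_mul, filter_mem_eq_inter, inter_eq_right.mpr hOW] at h1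
    have h2 : (k^2+4) * ((k^2+3) * X + 1) ≤ #O * ((k^2+3) * X + 1) := Nat.mul_le_mul_right _ hcon
    have h3 : (k^2+4) * ((k-2) * #{A ∈ F | z ∈ A} + ((k^2+3) * X + 1)) ≤
        (k^2+4) * ((n-2) * X) := by linarith
    have h4 := Nat.le_of_mul_le_mul_left h3 (by positivity)
    -- n * (k-2) * |F_z| ≥ (n - k^2 - 3) (n-2) X
    have h5 : n * Q ≤ (k^2+3) * Q + n * #{A ∈ F | z ∈ A} :=
      le_trans hz (by have := Nat.mul_le_mul_left n (hNF z); omega)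
    have h6 := Nat.mul_le_mul_left (k-2) h5
    have h7 : n * ((n-2) * X) ≤ (k^2+3) * ((n-2) * X) + n * ((k-2) * #{A ∈ F | z ∈ A}) := by
      rw [hqx]; linarith
    have h8 := Nat.mul_le_mul_left n h4
    have h9 : n * ((k^2+3) * X + 1) ≤ (k^2+3) * ((n-2) * X) := by linarith
    have h10 : (k^2+3) * ((n-2) * X) ≤ (k^2+3) * (n * X) := by gcongr; omega
    linarith
  refine ⟨x, (Bad ∪ O).erase x, ?_, notMem_erase _ _, ?_⟩
  · refine le_trans (card_le_card (erase_subset _ _)) ((card_union_le _ _).trans ?_)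
    omega
  intro A hA hxA w hwA
  rw [mem_erase]
  refine ⟨by rintro rfl; exact hxA hwA, ?_⟩
  rw [mem_union]
  by_contra! hcon
  obtain ⟨hwB, hwO⟩ := hcon
  have hwx : w ≠ x := by rintro rfl; exact hxA hwA
  have hwz : w ≠ z := by rintro rfl; exact hxA (hx A hA hwA)
  have hwW : w ∈ W := by simp [hW, hwx, hwz]
  obtain ⟨y, hyw, hy⟩ := hgood w hwB
  have hyx : y ≠ x := by
    rintro rfl; exact hxA (hy A hA hwA)
  have hyz : y ≠ z := by
    rintro rfl; exact hxA (hx A hA (hy A hA hwA))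
  apply hwO
  rw [hO, mem_filter]
  refine ⟨hwW, ?_⟩
  have h4 : #({w, z, x, y} : Finset (Fin n)) = 4 := by
    rw [card_insert_of_notMem, card_insert_of_notMem, card_pair hyx.symm]
    · simp [hxz.symm, hyz.symm]
    · simp [hwz, hwx, hyw.symm]
  have hsub4 : ∀ A ∈ F, z ∈ A ∧ w ∈ A → {w, z, x, y} ⊆ A := by
    rintro A hA ⟨h1, h2⟩ c hc
    simp only [mem_insert, mem_singleton] at hc
    rcases hc with rfl | rfl | rfl | rfl
    · exact h2
    · exact h1
    · exact hx A hA h1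
    · exact hy A hA h2
  rcases Nat.lt_or_ge k 4 with hk4 | hk4
  · have : d w = 0 := by
      rw [hd, card_eq_zero, filter_eq_empty_iff]
      intro A hA h
      have := card_le_card (hsub4 A hA h)
      rw [h4, hunif A hA] at this
      omega
    rw [this, mul_zero]; exact hX
  · have h5 : d w ≤ (n-4).choose (k-4) := by
      have := card_sup_le hunif {w, z, x, y} (by omega)
      rw [h4] at this
      refine le_trans (card_le_card ?_) this
      intro A hA
      rw [mem_filter] at hA ⊢
      exact ⟨hA.1, hsub4 A hA.1 hA.2⟩
    exact lt_of_le_of_lt (Nat.mul_le_mul_left _ h5) (hXdef ▸ numq n k hk4 hn)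

theorem stmt4 (n k : ℕ) (hk : 3 ≤ k) (hn : 3 * k * (2 * k).choose k ≤ n)
    (F : Finset (Finset (Fin n))) (hunif : ∀ S ∈ F, S.card = k)
    (hci : CondIntersecting 3 (2 * k) F)
    (hnotint : ∃ A ∈ F, ∃ B ∈ F, A ≠ B ∧ Disjoint A B) :
    F.card ≤ (n - k - 1).choose (k - 1) + 1 := by
  classical
  by_contra! hcon
  obtain ⟨x, Y₀, hY₀, hxY₀, hsub₀⟩ := stage_one hk hn hunif hci (by omega)
  set G := {A ∈ F | x ∉ A} with hG
  have hsplit : #{A ∈ F | x ∈ A} + #G = #F := card_filter_add_card_filter_not _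
  have hGne : G.Nonempty := by
    obtain ⟨A, hA, B, hB, -, hAB⟩ := hnotint
    by_cases h : x ∈ A
    · exact ⟨B, by rw [hG, mem_filter]; exact ⟨hB, Finset.disjoint_left.mp hAB h⟩⟩
    · exact ⟨A, by rw [hG, mem_filter]; exact ⟨hA, h⟩⟩
  obtain ⟨A, hAG⟩ := hGne
  have hAG' := hAG
  rw [hG, mem_filter] at hAG'
  have hone := star_single hk (numC n k hk hn) hunif hci x A hAG'.1 hAG'.2
  have hG2 : 1 < #G := by omega
  set Y := G.biUnion id with hY
  have hAY : A ⊆ Y := subset_biUnion_of_mem id hAG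
  have hYY : Y ⊆ Y₀ := by
    rw [hY, biUnion_subset]
    intro B hB
    rw [hG, mem_filter] at hB
    exact hsub₀ B hB.1 hB.2
  have hm2 : #Y ≤ 2*k^2+6 := (card_le_card hYY).trans hY₀
  have hm1 : k + 1 ≤ #Y := by
    obtain ⟨B, hB, hBA⟩ := exists_mem_ne hG2 A
    have hBY : B ⊆ Y := subset_biUnion_of_mem id hB
    rw [hG, mem_filter] at hB
    by_contra! h
    have e1 : A = Y := eq_of_subset_of_card_le hAY (by rw [hunif A hAG'.1]; omega)
    have e2 : B = Y := eq_of_subset_of_card_le hBY (by rw [hunif B hB.1]; omega)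
    exact hBA (e2.trans e1.symm)
  have hnm := numF1 n k (#Y) hk hn hm2
  have hmany := star_many hk hunif hci x Y (fun h => hxY₀ (hYY h)) rfl hnm
    (fun B hB hxB => subset_biUnion_of_mem id (by rw [hG, mem_filter]; exact ⟨hB, hxB⟩))
    (by
      intro y hy
      rw [hY, mem_biUnion] at hy
      obtain ⟨B, hB, hyB⟩ := hy
      rw [hG, mem_filter] at hB
      exact ⟨B, hB.1, hB.2, hyB⟩)
  have := numB n k (#Y) hk hn hm1 hm2 (by
    have := Nat.zero_le (k * #Y)
    omega)
  omega
end

section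
/- Let k ≥ 3 and n ≥ 3k·binomial(2k, k). Let F be a (3, 2k)-conditionally intersecting family of k-element subsets of [n] such that every member F of F contains a (k−1)-element subset that is contained in no other member of F, and let A, B ∈ F be disjoint. Then the number of members F of F with |F ∩ (A ∪ B)| ≤ k−1 is at most binomial(n−k−1, k−1) − 1; equivalently, Σ_{i=0}^{k−1} |F_i| ≤ Σ_{i=1}^{k−1} binomial(n−2k, k−i)·binomial(k−1, i−1), where F_i = {F ∈ F : |F ∩ (A ∪ B)| = i}. -/
/-- The working configuration: `g S` is a chosen own subset of `S`. -/
structure Cfg {n : ℕ} (k : ℕ) (F : Finset (Finset (Fin n)))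
    (g : Finset (Fin n) → Finset (Fin n)) (A B : Finset (Fin n)) : Prop where
  hk : 3 ≤ k
  unif : ∀ S ∈ F, S.card = k
  three : ∀ S ∈ F, ∀ T ∈ F, ∀ R ∈ F, S ≠ T → S ≠ R → T ≠ R →
    (∀ x, x ∈ S → x ∈ T → x ∈ R → False) →
    ∀ W : Finset (Fin n), S ⊆ W → T ⊆ W → R ⊆ W → 2 * k < W.card
  gsub : ∀ S ∈ F, g S ⊆ S
  gcard : ∀ S ∈ F, (g S).card = k - 1
  gown : ∀ S ∈ F, ∀ T ∈ F, g S ⊆ T → T = S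
  hA : A ∈ F
  hB : B ∈ F
  hAB : Disjoint A B

theorem Cfg.swap {n k : ℕ} {F : Finset (Finset (Fin n))}
    {g : Finset (Fin n) → Finset (Fin n)} {A B : Finset (Fin n)}
    (h : Cfg k F g A B) : Cfg k F g B A :=
  { h with hA := h.hB, hB := h.hA, hAB := h.hAB.symm }

theorem Cfg.mk' {n k : ℕ} (hk : 3 ≤ k)
    (F : Finset (Finset (Fin n))) (hunif : ∀ S ∈ F, S.card = k)
    (hci : CondIntersecting 3 (2 * k) F)
    (huniq : ∀ S ∈ F, ∃ G ⊆ S, G.card = k - 1 ∧ ∀ T ∈ F, G ⊆ T → T = S)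
    (A B : Finset (Fin n)) (hA : A ∈ F) (hB : B ∈ F) (hAB : Disjoint A B) :
    ∃ g, Cfg k F g A B := by
  classical
  choose! g hg using huniq
  refine ⟨g, hk, hunif, ?_, fun S hS => (hg S hS).1, fun S hS => (hg S hS).2.1,
    fun S hS => (hg S hS).2.2, hA, hB, hAB⟩
  intro S hS T hT R hR h1 h2 h3 hx W hSW hTW hRW
  by_contra hW
  apply hci
  refine ⟨{S, T, R}, ?_, ?_, ?_, ?_⟩
  · intro X hX
    simp only [Finset.mem_insert, Finset.mem_singleton] at hX
    rcases hX with rfl | rfl | rfl <;> assumption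
  · rw [Finset.card_eq_three]; exact ⟨S, T, R, h1, h2, h3, rfl⟩
  · refine le_trans (Finset.card_le_card (t := W) ?_) (not_lt.mp hW)
    have : ({S, T, R} : Finset (Finset (Fin n))).sup id ≤ W := by
      apply Finset.sup_le
      intro X hX
      simp only [Finset.mem_insert, Finset.mem_singleton] at hX
      rcases hX with rfl | rfl | rfl <;> assumption
    exact this
  · ext x
    simp only [Finset.inf_insert, Finset.inf_singleton, id, Finset.inf_eq_inter,
      Finset.mem_inter, Finset.notMem_empty, iff_false]
    rintro ⟨a, b, c⟩
    exact hx x a b c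

theorem card_aux {n : ℕ} (A E : Finset (Fin n)) (x y : Fin n) :
    (insert x (insert y (A ∪ E))).card ≤ A.card + E.card + 2 := by
  have h1 := Finset.card_insert_le x (insert y (A ∪ E))
  have h2 := Finset.card_insert_le y (A ∪ E)
  have h3 := Finset.card_union_le A E
  omega

section
variable {n k : ℕ} {F : Finset (Finset (Fin n))}
    {g : Finset (Fin n) → Finset (Fin n)} {A B : Finset (Fin n)}

/-- Convenient form of the three-sets condition. -/
theorem Cfg.bad (h : Cfg k F g A B) {S T R : Finset (Fin n)} (hS : S ∈ F) (hT : T ∈ F)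
    (hR : R ∈ F) (h1 : S ≠ T) (h2 : S ≠ R) (h3 : T ≠ R)
    (hx : ∀ x, x ∈ S → x ∈ T → x ∈ R → False) (E : Finset (Fin n)) (hE : E.card = k - 2)
    (p q : Fin n) (hSW : S ⊆ insert p (insert q (R ∪ E)))
    (hTW : T ⊆ insert p (insert q (R ∪ E))) : False := by
  have hRW : R ⊆ insert p (insert q (R ∪ E)) := by
    intro x hx; simp [hx]
  have := h.three S hS T hT R hR h1 h2 h3 hx _ hSW hTW hRW
  have h4 := card_aux R E p q
  have := h.unif R hR
  have := h.hk
  omega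

theorem Cfg.out_aux (h : Cfg k F g A B) {E : Finset (Fin n)} (hE : E.card = k - 2)
    (hEA : ∀ e ∈ E, e ∉ A) (hEB : ∀ e ∈ E, e ∉ B) {S0 S : Finset (Fin n)}
    (hS0 : S0 ∈ F) (hS : S ∈ F) (hne : S ≠ S0) {c0 y c x : Fin n}
    (hg0 : g S0 = insert c0 E) (he0 : S0 = insert y (insert c0 E)) (hc0 : c0 ∈ A)
    (hyA : y ∉ A) (hyB : y ∉ B) (he : S = insert x (insert c E))
    (hcD : c ∈ A ∨ c ∈ B) :
    c ∉ A ∧ x ∉ A ∧ x ∉ B := by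
  have hk := h.hk
  obtain ⟨e, hee⟩ : E.Nonempty := by rw [← Finset.card_pos]; omega
  have hd := Finset.disjoint_left.mp h.hAB
  have hc0S : c0 ∉ S := by
    intro hc
    apply hne
    apply h.gown S0 hS0 S hS
    rw [hg0, he]
    rw [he] at hc
    intro z hz
    grind
  have hSA : S ≠ A := by rintro rfl; exact hEA e hee (by rw [he]; simp [hee])
  have hSB : S ≠ B := by rintro rfl; exact hEB e hee (by rw [he]; simp [hee])
  have hS0A : S0 ≠ A := by rintro rfl; exact hEA e hee (by rw [he0]; simp [hee])
  have hS0B : S0 ≠ B := by rintro rfl; exact hEB e hee (by rw [he0]; simp [hee])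
  have hcA : c ∉ A := by
    intro hc
    refine h.bad hS hS0 h.hA hne hSA hS0A ?_ E hE x y ?_ ?_
    · intro z; grind
    · intro z; grind
    · intro z; grind
  have hcB : c ∈ B := by tauto
  refine ⟨hcA, fun hx => ?_, fun hx => ?_⟩
  · refine h.bad hS hS0 h.hA hne hSA hS0A ?_ E hE c y ?_ ?_
    · intro z; grind
    · intro z; grind
    · intro z; grind
  · refine h.bad hS hS0 h.hB hne hSB hS0B ?_ E hE c0 y ?_ ?_
    · intro z; grind
    · intro z; grind
    · intro z; grind

theorem pair_logic {n : ℕ} {A B : Finset (Fin n)} (hdis : ∀ ⦃a : Fin n⦄, a ∈ A → a ∉ B)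
    {c x d y : Fin n}
    (hc : c ∈ A ∨ c ∈ B) (hd : d ∈ A ∨ d ∈ B) (hx : x ∈ A ∨ x ∈ B) (hy : y ∈ A ∨ y ∈ B)
    (keyA : (x = y → x ∉ A) →
      ∀ p q, (x = p ∨ x = q ∨ x ∈ A) → (c = p ∨ c = q ∨ c ∈ A) →
      (y = p ∨ y = q ∨ y ∈ A) → (d = p ∨ d = q ∨ d ∈ A) → False)
    (keyB : (x = y → x ∉ B) →
      ∀ p q, (x = p ∨ x = q ∨ x ∈ B) → (c = p ∨ c = q ∨ c ∈ B) →
      (y = p ∨ y = q ∨ y ∈ B) → (d = p ∨ d = q ∨ d ∈ B) → False) :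
    x = y ∧ ((x ∈ A ∧ c ∈ A ∧ d ∈ A) ∨ (x ∈ B ∧ c ∈ B ∧ d ∈ B)) := by
  by_cases hxy : x = y
  · refine ⟨hxy, ?_⟩
    subst hxy
    rcases hx with hx | hx
    · have hxB := hdis hx
      left
      refine ⟨hx, ?_, ?_⟩
      · by_contra hcA
        exact keyB (fun _ => hxB) x d (by grind only) (by grind only) (by grind only) (by grind only)
      · by_contra hcA
        exact keyB (fun _ => hxB) x c (by grind only) (by grind only) (by grind only) (by grind only)
    · have hxA : x ∉ A := fun hxA => hdis hxA hx
      right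
      refine ⟨hx, ?_, ?_⟩
      · by_contra hcA
        exact keyA (fun _ => hxA) x d (by grind only) (by grind only) (by grind only) (by grind only)
      · by_contra hcA
        exact keyA (fun _ => hxA) x c (by grind only) (by grind only) (by grind only) (by grind only)
  · exfalso
    have keyA := keyA (fun e => absurd e hxy)
    have keyB := keyB (fun e => absurd e hxy)
    rcases hc with hc | hc <;> rcases hd with hd | hd
    · exact keyA x y (by grind only) (by grind only) (by grind only) (by grind only)
    · rcases hx with hx | hx
      · exact keyA y d (by grind only) (by grind only) (by grind only) (by grind only)
      · exact keyB y c (by grind only) (by grind only) (by grind only) (by grind only)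
    · rcases hx with hx | hx
      · exact keyA y c (by grind only) (by grind only) (by grind only) (by grind only)
      · exact keyB y d (by grind only) (by grind only) (by grind only) (by grind only)
    · exact keyB x y (by grind only) (by grind only) (by grind only) (by grind only)

theorem Cfg.in_aux (h : Cfg k F g A B) {E : Finset (Fin n)} (hE : E.card = k - 2)
    (hEA : ∀ e ∈ E, e ∉ A) (hEB : ∀ e ∈ E, e ∉ B) {S T : Finset (Fin n)}
    (hS : S ∈ F) (hT : T ∈ F) (hne : S ≠ T) {c x d y : Fin n}
    (hgS : g S = insert c E) (hgT : g T = insert d E)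
    (heS : S = insert x (insert c E)) (heT : T = insert y (insert d E))
    (hc : c ∈ A ∨ c ∈ B) (hd : d ∈ A ∨ d ∈ B) (hx : x ∈ A ∨ x ∈ B) (hy : y ∈ A ∨ y ∈ B) :
    x = y ∧ ((x ∈ A ∧ c ∈ A ∧ d ∈ A) ∨ (x ∈ B ∧ c ∈ B ∧ d ∈ B)) := by
  have hk := h.hk
  obtain ⟨e, hee⟩ : E.Nonempty := by rw [← Finset.card_pos]; omega
  have hdis := Finset.disjoint_left.mp h.hAB
  have hSA : S ≠ A := by rintro rfl; exact hEA e hee (by rw [heS]; simp [hee])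
  have hSB : S ≠ B := by rintro rfl; exact hEB e hee (by rw [heS]; simp [hee])
  have hTA : T ≠ A := by rintro rfl; exact hEA e hee (by rw [heT]; simp [hee])
  have hTB : T ≠ B := by rintro rfl; exact hEB e hee (by rw [heT]; simp [hee])
  have hcT : c ∉ T := by
    intro hcT
    apply hne
    refine (h.gown S hS T hT ?_).symm
    rw [hgS]
    intro z hz
    grind
  have hdS : d ∉ S := by
    intro hdS
    apply hne
    refine (h.gown T hT S hS ?_)
    rw [hgT]
    intro z hz
    grind
  have hcd : c ≠ d := by rintro rfl; apply hcT; rw [heT]; simp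
  have hcy : c ≠ y := by rintro rfl; apply hcT; rw [heT]; simp
  have hxd : x ≠ d := by rintro rfl; apply hdS; rw [heS]; simp
  have key : ∀ C, C ∈ F → S ≠ C → T ≠ C → (∀ e ∈ E, e ∉ C) → (x = y → x ∉ C) →
      ∀ p q, (x = p ∨ x = q ∨ x ∈ C) → (c = p ∨ c = q ∨ c ∈ C) →
      (y = p ∨ y = q ∨ y ∈ C) → (d = p ∨ d = q ∨ d ∈ C) → False := by
    intro C hC h1 h2 h3 h4 p q h5 h6 h7 h8
    refine h.bad hS hT hC hne h1 h2 ?_ E hE p q ?_ ?_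
    · intro z h9 h10 h11
      have h12 := h3 z
      rw [heS] at h9
      rw [heT] at h10
      simp only [Finset.mem_insert] at h9 h10
      grind
    · intro z h9
      rw [heS] at h9
      simp only [Finset.mem_insert, Finset.mem_union] at h9 ⊢
      grind
    · intro z h9
      rw [heT] at h9
      simp only [Finset.mem_insert, Finset.mem_union] at h9 ⊢
      grind
  have keyA := key A h.hA hSA hTA hEA
  have keyB := key B h.hB hSB hTB hEB
  exact pair_logic hdis hc hd hx hy keyA keyB

theorem Cfg.data (h : Cfg k F g A B) {E : Finset (Fin n)}
    {S : Finset (Fin n)} (hS : S ∈ F)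
    (h1 : g S \ (A ∪ B) = E) (h2 : (g S ∩ (A ∪ B)).card = 1) :
    ∃ c x, g S = insert c E ∧ S = insert x (insert c E) ∧ (c ∈ A ∨ c ∈ B) ∧ x ∉ E ∧ x ≠ c := by
  obtain ⟨c, hc⟩ := Finset.card_eq_one.mp h2
  have hgS : g S = insert c E := by
    rw [← h1, Finset.insert_eq, ← hc, Finset.union_comm]
    exact (Finset.sdiff_union_inter _ _).symm
  have hcD : c ∈ g S ∩ (A ∪ B) := by rw [hc]; simp
  have hcard : (S \ g S).card = 1 := by
    rw [Finset.card_sdiff_of_subset (h.gsub S hS), h.unif S hS, h.gcard S hS]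
    have := h.hk
    omega
  obtain ⟨x, hx⟩ := Finset.card_eq_one.mp hcard
  have hxS : x ∈ S \ g S := by rw [hx]; simp
  have hSe : S = insert x (g S) := by
    rw [Finset.insert_eq, ← hx]
    exact (Finset.sdiff_union_of_subset (h.gsub S hS)).symm
  refine ⟨c, x, hgS, by rw [← hgS]; exact hSe, by simpa using (Finset.mem_inter.mp hcD).2, ?_, ?_⟩
  · intro hxE
    have := (Finset.mem_sdiff.mp hxS).2
    rw [hgS] at this; simp [hxE] at this
  · rintro rfl
    have := (Finset.mem_sdiff.mp hxS).2
    rw [hgS] at this; simp at this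

/-- Members whose chosen own subset meets `A ∪ B` in one point and is `E` outside. -/
def Fib (F : Finset (Finset (Fin n))) (g : Finset (Fin n) → Finset (Fin n))
    (A B E : Finset (Fin n)) : Finset (Finset (Fin n)) :=
  F.filter (fun S => g S \ (A ∪ B) = E ∧ (g S ∩ (A ∪ B)).card = 1)

def StarAt (F : Finset (Finset (Fin n))) (C : Finset (Fin n)) (u : Fin n)
    (E : Finset (Fin n)) : Prop :=
  u ∈ C ∧ ∀ a ∈ C, a ≠ u → insert u (insert a E) ∈ F

theorem Cfg.fib_in (h : Cfg k F g A B) {E : Finset (Fin n)}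
    {c : Finset (Fin n) → Fin n} {u : Fin n} {C : Finset (Fin n)} (hC : C ∈ F) (hu : u ∈ C)
    (h0 : ∀ S ∈ Fib F g A B E, S ∈ F ∧ g S = insert (c S) E ∧ S = insert u (insert (c S) E)
      ∧ u ≠ c S ∧ c S ∈ C) :
    (Fib F g A B E).card ≤ k - 1 ∧ ((Fib F g A B E).card ≤ k - 2 ∨ StarAt F C u E) := by
  have hk := h.hk
  have hcardE : (C.erase u).card = k - 1 := by
    rw [Finset.card_erase_of_mem hu, h.unif C hC]
  have hsub : (Fib F g A B E).image c ⊆ C.erase u := by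
    intro z hz
    obtain ⟨S, hS, rfl⟩ := Finset.mem_image.mp hz
    have := h0 S hS
    rw [Finset.mem_erase]
    exact ⟨this.2.2.2.1.symm, this.2.2.2.2⟩
  have hinj : ((Fib F g A B E).image c).card = (Fib F g A B E).card := by
    apply Finset.card_image_of_injOn
    intro S hS T hT hcc
    have h1 := (h0 S hS).2.2.1
    have h2 := (h0 T hT).2.2.1
    rw [h1, h2, hcc]
  have hle := Finset.card_le_card hsub
  refine ⟨by omega, ?_⟩
  by_cases hlt : (Fib F g A B E).card ≤ k - 2
  · exact Or.inl hlt
  · right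
    have heq : (Fib F g A B E).image c = C.erase u :=
      Finset.eq_of_subset_of_card_le hsub (by omega)
    refine ⟨hu, fun a ha hau => ?_⟩
    have : a ∈ (Fib F g A B E).image c := by rw [heq]; exact Finset.mem_erase.mpr ⟨hau, ha⟩
    obtain ⟨S, hS, rfl⟩ := Finset.mem_image.mp this
    have := h0 S hS
    rw [← this.2.2.1]
    exact this.1

theorem Cfg.fib (h : Cfg k F g A B) {E : Finset (Fin n)} (hE : E.card = k - 2)
    (hEA : ∀ e ∈ E, e ∉ A) (hEB : ∀ e ∈ E, e ∉ B) :
    (Fib F g A B E).card ≤ k - 1 ∧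
    ((Fib F g A B E).card ≤ k - 2 ∨
      (∃ S ∈ F, ∃ y, y ∉ A ∧ y ∉ B ∧ y ∉ E ∧ insert y E ⊆ S ∧ g S ≠ insert y E) ∨
      (∃ u, StarAt F A u E) ∨ (∃ u, StarAt F B u E)) := by
  have hk := h.hk
  have hd := Finset.disjoint_left.mp h.hAB
  have hdata : ∀ S ∈ Fib F g A B E, ∃ c x, S ∈ F ∧ g S = insert c E ∧
      S = insert x (insert c E) ∧ (c ∈ A ∨ c ∈ B) ∧ x ∉ E ∧ x ≠ c := by
    intro S hS
    have hS := Finset.mem_filter.mp hS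
    obtain ⟨c, x, h1⟩ := h.data hS.1 hS.2.1 hS.2.2
    exact ⟨c, x, hS.1, h1⟩
  by_cases hemp : Fib F g A B E = ∅
  · rw [hemp]
    simp
  obtain ⟨S', hS'⟩ := Finset.nonempty_iff_ne_empty.mpr hemp
  have : Nonempty (Fin n) := ⟨(hdata S' hS').choose⟩
  choose! c x hcx using hdata
  by_cases hout : ∃ S ∈ Fib F g A B E, x S ∉ A ∧ x S ∉ B
  · obtain ⟨S, hS, hxA, hxB⟩ := hout
    obtain ⟨h1, h2, h3, h4, h5, h6⟩ := hcx S hS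
    constructor
    · suffices (Fib F g A B E).card ≤ 2 by omega
      by_contra hcon
      have hcon : 2 < (Fib F g A B E).card := by omega
      have : 1 < ((Fib F g A B E).erase S).card := by
        rw [Finset.card_erase_of_mem hS]; omega
      obtain ⟨T, hT, R, hR, hTR⟩ := Finset.one_lt_card.mp this
      rw [Finset.mem_erase] at hT hR
      obtain ⟨t1, t2, t3, t4, t5, t6⟩ := hcx T hT.2
      obtain ⟨r1, r2, r3, r4, r5, r6⟩ := hcx R hR.2
      have final : ∀ A' B', Cfg k F g A' B' → (∀ e ∈ E, e ∉ A') → (∀ e ∈ E, e ∉ B') →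
          c S ∈ A' → x S ∉ A' → x S ∉ B' → (c T ∈ A' ∨ c T ∈ B') → (c R ∈ A' ∨ c R ∈ B') →
          False := by
        intro A' B' h' hE1 hE2 q1 q2 q3 q4 q5
        have e1 := h'.out_aux hE hE1 hE2 h1 t1 hT.1 h2 h3 q1 q2 q3 t3 q4
        have e2 := h'.out_aux hE hE1 hE2 h1 r1 hR.1 h2 h3 q1 q2 q3 r3 q5
        have e3 := h'.swap.out_aux hE hE2 hE1 t1 r1 hTR.symm t2 t3 (q4.resolve_left e1.1)
          e1.2.2 e1.2.1 r3 q5.symm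
        exact q5.elim e2.1 e3.1
      rcases h4 with h4 | h4
      · exact final A B h hEA hEB h4 hxA hxB t4 r4
      · exact final B A h.swap hEB hEA h4 hxB hxA t4.symm r4.symm
    · right; left
      refine ⟨S, h1, x S, hxA, hxB, h5, ?_, ?_⟩
      · intro z hz; rw [h3]; grind
      · intro hh
        have : c S ∈ g S := by rw [h2]; simp
        rw [hh, Finset.mem_insert] at this
        rcases this with h7 | h7
        · exact h6 h7.symm
        · exact h4.elim (hEA _ h7) (hEB _ h7)
  · push Not at hout
    by_cases hle : (Fib F g A B E).card ≤ 1
    · exact ⟨by omega, Or.inl (by omega)⟩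
    · obtain ⟨S, hS, T, hT, hST⟩ := Finset.one_lt_card.mp (not_le.mp hle)
      have hpair : ∀ S ∈ Fib F g A B E, ∀ T ∈ Fib F g A B E, S ≠ T → x S = x T ∧
          ((x S ∈ A ∧ c S ∈ A ∧ c T ∈ A) ∨ (x S ∈ B ∧ c S ∈ B ∧ c T ∈ B)) := by
        intro S hS T hT hST
        obtain ⟨s1, s2, s3, s4, s5, s6⟩ := hcx S hS
        obtain ⟨t1, t2, t3, t4, t5, t6⟩ := hcx T hT
        exact h.in_aux hE hEA hEB s1 t1 hST s2 t2 s3 t3 s4 t4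
          (or_iff_not_imp_left.mpr (hout S hS)) (or_iff_not_imp_left.mpr (hout T hT))
      have hxx : ∀ R ∈ Fib F g A B E, x R = x S := by
        intro R hR
        by_cases hRS : R = S
        · rw [hRS]
        · exact (hpair R hR S hS hRS).1
      have hcc : (x S ∈ A ∧ ∀ R ∈ Fib F g A B E, c R ∈ A) ∨
          (x S ∈ B ∧ ∀ R ∈ Fib F g A B E, c R ∈ B) := by
        rcases (hpair S hS T hT hST).2 with hh | hh
        · left
          refine ⟨hh.1, fun R hR => ?_⟩
          by_cases hRS : R = S
          · rw [hRS]; exact hh.2.1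
          · have := (hpair S hS R hR (Ne.symm hRS)).2
            have h8 := hd hh.1
            rcases this with h9 | h9
            · exact h9.2.2
            · exact absurd h9.1 h8
        · right
          refine ⟨hh.1, fun R hR => ?_⟩
          by_cases hRS : R = S
          · rw [hRS]; exact hh.2.1
          · have := (hpair S hS R hR (Ne.symm hRS)).2
            have h8 : x S ∉ A := fun hA => hd hA hh.1
            rcases this with h9 | h9
            · exact absurd h9.1 h8
            · exact h9.2.2
      rcases hcc with ⟨hu, hcc⟩ | ⟨hu, hcc⟩
      · have := h.fib_in (E := E) (c := c) h.hA hu (by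
          intro R hR
          obtain ⟨s1, s2, s3, s4, s5, s6⟩ := hcx R hR
          rw [hxx R hR] at s3 s6
          exact ⟨s1, s2, s3, s6, hcc R hR⟩)
        refine ⟨this.1, this.2.imp id fun hs => Or.inr (Or.inl ⟨_, hs⟩)⟩
      · have := h.fib_in (E := E) (c := c) h.hB hu (by
          intro R hR
          obtain ⟨s1, s2, s3, s4, s5, s6⟩ := hcx R hR
          rw [hxx R hR] at s3 s6
          exact ⟨s1, s2, s3, s6, hcc R hR⟩)
        refine ⟨this.1, this.2.imp id fun hs => Or.inr (Or.inr ⟨_, hs⟩)⟩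

end

section
variable {n k : ℕ} {F : Finset (Finset (Fin n))}
    {g : Finset (Fin n) → Finset (Fin n)} {A B : Finset (Fin n)}

theorem card_containing (p : Finset (Fin n)) (r : ℕ) (X : Finset (Finset (Fin n)))
    (hX : ∀ S ∈ X, S.card = r ∧ p ⊆ S) : X.card ≤ n.choose (r - p.card) := by
  have : (X.image (fun S => S \ p)).card = X.card := by
    apply Finset.card_image_of_injOn
    intro S hS T hT hST
    have h1 := Finset.sdiff_union_of_subset (hX S hS).2
    have h2 := Finset.sdiff_union_of_subset (hX T hT).2
    simp only at hST
    rw [← h1, ← h2, hST]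
  rw [← this]
  calc _ ≤ (Finset.powersetCard (r - p.card) (Finset.univ : Finset (Fin n))).card := by
        apply Finset.card_le_card
        intro Y hY
        obtain ⟨S, hS, rfl⟩ := Finset.mem_image.mp hY
        rw [Finset.mem_powersetCard]
        refine ⟨Finset.subset_univ _, ?_⟩
        rw [Finset.card_sdiff_of_subset (hX S hS).2, (hX S hS).1]
    _ = _ := by simp

theorem card_meeting (p : Finset (Fin n)) (r : ℕ) (X : Finset (Finset (Fin n)))
    (hX : ∀ S ∈ X, S.card = r ∧ ¬ Disjoint S p) : X.card ≤ p.card * n.choose (r - 1) := by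
  calc X.card ≤ (p.biUnion (fun x => X.filter (fun S => x ∈ S))).card := by
        apply Finset.card_le_card
        intro S hS
        obtain ⟨x, h1, h2⟩ := Finset.not_disjoint_iff.mp (hX S hS).2
        rw [Finset.mem_biUnion]
        exact ⟨x, h2, Finset.mem_filter.mpr ⟨hS, h1⟩⟩
    _ ≤ p.card * n.choose (r - 1) := by
        apply Finset.card_biUnion_le_card_mul
        intro x _
        have := card_containing {x} r (X.filter (fun S => x ∈ S)) (by
          intro S hS
          have hS := Finset.mem_filter.mp hS
          exact ⟨(hX S hS.1).1, by simpa using hS.2⟩)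
        simpa using this

theorem Cfg.ginj (h : Cfg k F g A B) : Set.InjOn g (F : Set (Finset (Fin n))) := by
  intro S hS T hT hST
  exact (h.gown S hS T hT (by rw [hST]; exact h.gsub T hT)).symm

theorem Cfg.cardD (h : Cfg k F g A B) : (A ∪ B).card = 2 * k := by
  rw [Finset.card_union_of_disjoint h.hAB, h.unif A h.hA, h.unif B h.hB]; ring

theorem Cfg.cardO (h : Cfg k F g A B) : ((A ∪ B)ᶜ).card = n - 2 * k := by
  rw [Finset.card_compl, h.cardD, Fintype.card_fin]

theorem Cfg.lvl2 (h : Cfg k F g A B) :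
    (F.filter (fun S => 2 ≤ (g S ∩ (A ∪ B)).card)).card ≤ (2 * k).choose 2 * n.choose (k - 3) := by
  have hk := h.hk
  calc _ ≤ ((Finset.powersetCard 2 (A ∪ B)).biUnion
        (fun p => F.filter (fun S => p ⊆ g S))).card := by
        apply Finset.card_le_card
        intro S hS
        have hS := Finset.mem_filter.mp hS
        obtain ⟨p, hp, hpc⟩ := Finset.exists_subset_card_eq hS.2
        rw [Finset.mem_biUnion]
        refine ⟨p, Finset.mem_powersetCard.mpr ⟨hp.trans Finset.inter_subset_right, hpc⟩, ?_⟩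
        exact Finset.mem_filter.mpr ⟨hS.1, hp.trans Finset.inter_subset_left⟩
    _ ≤ (Finset.powersetCard 2 (A ∪ B)).card * n.choose (k - 3) := by
        apply Finset.card_biUnion_le_card_mul
        intro p hp
        have hp := (Finset.mem_powersetCard.mp hp).2
        have h1 : ((F.filter (fun S => p ⊆ g S)).image g).card
            = (F.filter (fun S => p ⊆ g S)).card := by
          apply Finset.card_image_of_injOn
          intro S hS T hT hST
          exact h.ginj (Finset.mem_filter.mp hS).1 (Finset.mem_filter.mp hT).1 hST
        rw [← h1]
        have := card_containing p (k - 1) ((F.filter (fun S => p ⊆ g S)).image g) (by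
          intro G hG
          obtain ⟨S, hS, rfl⟩ := Finset.mem_image.mp hG
          have hS := Finset.mem_filter.mp hS
          exact ⟨h.gcard S hS.1, hS.2⟩)
        rw [hp] at this
        exact this
    _ = _ := by rw [Finset.card_powersetCard, h.cardD]

theorem Cfg.lvl0 (h : Cfg k F g A B) (Z : Finset (Finset (Fin n)))
    (hZ : Z ⊆ Finset.powersetCard (k - 1) (A ∪ B)ᶜ) (hZF : ∀ G ∈ Z, ∀ S ∈ F, g S ≠ G) :
    (F.filter (fun S => (g S ∩ (A ∪ B)).card = 0)).card + Z.card ≤ (n - 2 * k).choose (k - 1) := by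
  have h1 : ((F.filter (fun S => (g S ∩ (A ∪ B)).card = 0)).image g).card
      = (F.filter (fun S => (g S ∩ (A ∪ B)).card = 0)).card := by
    apply Finset.card_image_of_injOn
    intro S hS T hT hST
    exact h.ginj (Finset.mem_filter.mp hS).1 (Finset.mem_filter.mp hT).1 hST
  rw [← h1, ← Finset.card_union_of_disjoint]
  · rw [← h.cardO, ← Finset.card_powersetCard]
    apply Finset.card_le_card
    apply Finset.union_subset _ hZ
    intro G hG
    obtain ⟨S, hS, rfl⟩ := Finset.mem_image.mp hG
    have hS := Finset.mem_filter.mp hS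
    rw [Finset.mem_powersetCard]
    refine ⟨?_, h.gcard S hS.1⟩
    rw [Finset.subset_compl_iff_disjoint_right, Finset.disjoint_iff_inter_eq_empty]
    exact Finset.card_eq_zero.mp hS.2
  · rw [Finset.disjoint_left]
    intro G hG hGZ
    obtain ⟨S, hS, rfl⟩ := Finset.mem_image.mp hG
    exact hZF _ hGZ S (Finset.mem_filter.mp hS).1 rfl

theorem memO {E : Finset (Fin n)} {r : ℕ} (hE : E ∈ Finset.powersetCard r (A ∪ B)ᶜ) :
    E.card = r ∧ (∀ e ∈ E, e ∉ A) ∧ (∀ e ∈ E, e ∉ B) := by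
  rw [Finset.mem_powersetCard] at hE
  refine ⟨hE.2, fun e he hA => ?_, fun e he hA => ?_⟩
  · have := hE.1 he; simp [hA] at this
  · have := hE.1 he; simp [hA] at this

theorem Cfg.lvl1 (h : Cfg k F g A B) (Y : Finset (Finset (Fin n)))
    (hY : Y ⊆ Finset.powersetCard (k - 2) (A ∪ B)ᶜ) (hYF : ∀ E ∈ Y, (Fib F g A B E).card ≤ k - 2) :
    (F.filter (fun S => (g S ∩ (A ∪ B)).card = 1)).card + Y.card
      ≤ (k - 1) * (n - 2 * k).choose (k - 2) := by
  have hk := h.hk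
  have h1 : (F.filter (fun S => (g S ∩ (A ∪ B)).card = 1)).card
      = ∑ E ∈ Finset.powersetCard (k - 2) (A ∪ B)ᶜ, (Fib F g A B E).card := by
    rw [Finset.card_eq_sum_card_fiberwise (f := fun S => g S \ (A ∪ B))
      (t := Finset.powersetCard (k - 2) (A ∪ B)ᶜ)]
    · apply Finset.sum_congr rfl
      intro E _
      congr 1
      ext S
      simp only [Fib, Finset.mem_filter]
      tauto
    · intro S hS
      have hS := Finset.mem_filter.mp hS
      rw [Finset.mem_coe, Finset.mem_powersetCard]
      constructor
      · intro z hz; simp only [Finset.mem_sdiff] at hz; simpa using hz.2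
      · change (g S \ (A ∪ B)).card = k - 2
        have := Finset.card_sdiff_add_card_inter (g S) (A ∪ B)
        have := h.gcard S hS.1
        omega
  have h2 : Y.card = ∑ E ∈ Finset.powersetCard (k - 2) (A ∪ B)ᶜ, (if E ∈ Y then 1 else 0) := by
    rw [← Finset.sum_filter, Finset.sum_const, smul_eq_mul, mul_one]
    congr 1
    ext E
    simp only [Finset.mem_filter]
    exact ⟨fun hE => ⟨hY hE, hE⟩, fun hE => hE.2⟩
  rw [h1, h2, ← Finset.sum_add_distrib]
  calc _ ≤ ∑ E ∈ Finset.powersetCard (k - 2) (A ∪ B)ᶜ, (k - 1) := by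
        apply Finset.sum_le_sum
        intro E hE
        obtain ⟨e1, e2, e3⟩ := memO hE
        have := (h.fib e1 e2 e3).1
        split_ifs with hEY
        · have := hYF E hEY; omega
        · omega
    _ = _ := by
        rw [Finset.sum_const, Finset.card_powersetCard, h.cardO, smul_eq_mul, mul_comm]

theorem Cfg.total (h : Cfg k F g A B) (Z Y : Finset (Finset (Fin n)))
    (hZ : Z ⊆ Finset.powersetCard (k - 1) (A ∪ B)ᶜ) (hZF : ∀ G ∈ Z, ∀ S ∈ F, g S ≠ G)
    (hY : Y ⊆ Finset.powersetCard (k - 2) (A ∪ B)ᶜ) (hYF : ∀ E ∈ Y, (Fib F g A B E).card ≤ k - 2) :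
    F.card + Z.card + Y.card ≤ (n - 2 * k).choose (k - 1) + (k - 1) * (n - 2 * k).choose (k - 2)
      + (2 * k).choose 2 * n.choose (k - 3) := by
  have h0 := h.lvl0 Z hZ hZF
  have h1 := h.lvl1 Y hY hYF
  have h2 := h.lvl2
  have h3 : F ⊆ F.filter (fun S => (g S ∩ (A ∪ B)).card = 0) ∪
      F.filter (fun S => (g S ∩ (A ∪ B)).card = 1) ∪
      F.filter (fun S => 2 ≤ (g S ∩ (A ∪ B)).card) := by
    intro S hS
    simp only [Finset.mem_union, Finset.mem_filter, hS, true_and]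
    omega
  have h4 := Finset.card_le_card h3
  have h5 := Finset.card_union_le (F.filter (fun S => (g S ∩ (A ∪ B)).card = 0) ∪
      F.filter (fun S => (g S ∩ (A ∪ B)).card = 1)) (F.filter (fun S => 2 ≤ (g S ∩ (A ∪ B)).card))
  have h6 := Finset.card_union_le (F.filter (fun S => (g S ∩ (A ∪ B)).card = 0))
      (F.filter (fun S => (g S ∩ (A ∪ B)).card = 1))
  omega

/-- Any set outside containing a star and missing the centre is impossible. -/
theorem Cfg.star_kill (h : Cfg k F g A B) {u a : Fin n} {X X' S : Finset (Fin n)}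
    (hX : StarAt F A u X) (hX' : StarAt F A u X') (hc' : X'.card = k - 2)
    (hdis : Disjoint X X') (hXn : X.Nonempty) (ha : a ∈ A) (hau : a ≠ u)
    (hXA : ∀ e ∈ X, e ∉ A)
    (hS : S ∈ F) (huS : u ∉ S) (haS : a ∉ S) (hXS : X ⊆ S) : False := by
  have hd := Finset.disjoint_left.mp hdis
  obtain ⟨e, he⟩ := hXn
  have hu := hX.1
  have h1 := hX.2 a ha hau
  have h2 := hX'.2 a ha hau
  have key : ∀ z, z ∈ S → z ≠ u ∧ z ≠ a := by
    intro z hz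
    exact ⟨fun hh => huS (hh ▸ hz), fun hh => haS (hh ▸ hz)⟩
  refine h.bad h1 h2 hS ?_ ?_ ?_ ?_ X' hc' u a ?_ ?_
  · intro hh
    have : e ∈ insert u (insert a X') := by rw [← hh]; simp [he]
    simp only [Finset.mem_insert] at this
    rcases this with rfl | rfl | this
    · exact hXA _ he hu
    · exact hXA _ he ha
    · exact hd he this
  · intro hh; apply huS; rw [← hh]; simp
  · intro hh; apply huS; rw [← hh]; simp
  · intro z hz1 hz2 hz3
    have := key z hz3
    simp only [Finset.mem_insert, this.1, this.2, false_or] at hz1 hz2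
    exact hd hz1 hz2
  · intro z hz
    simp only [Finset.mem_insert, Finset.mem_union] at hz ⊢
    rcases hz with hz | hz | hz
    · exact Or.inl hz
    · exact Or.inr (Or.inl hz)
    · exact Or.inr (Or.inr (Or.inl (hXS hz)))
  · intro z hz
    simp only [Finset.mem_insert, Finset.mem_union] at hz ⊢
    tauto

theorem Cfg.caseI (h : Cfg k F g A B) {u : Fin n} (Xs : Finset (Finset (Fin n)))
    (hXs : Xs ⊆ Finset.powersetCard (k - 2) (A ∪ B)ᶜ) (hst : ∀ X ∈ Xs, StarAt F A u X)
    (hbig : 2 * k ^ 2 * n.choose (k - 3) ≤ Xs.card) (hR : 0 < n.choose (k - 3))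
    {T : Finset (Fin n)} (hT : T ∈ F) (huT : u ∉ T) (hTD : ¬ T ⊆ A ∪ B) :
    F.card ≤ (n - 2 * k).choose (k - 1) + (k - 1) * (n - 2 * k).choose (k - 2) := by
  have hk := h.hk
  obtain ⟨y, hyT, hyD⟩ := Finset.not_subset.mp hTD
  have hyA : y ∉ A := fun hy => hyD (Finset.mem_union_left _ hy)
  set X1 := Xs.filter (fun X => Disjoint X T) with hX1
  have hcard : Xs.card ≤ X1.card + k * n.choose (k - 3) := by
    have h1 := Finset.card_filter_add_card_filter_not (s := Xs) (fun X => Disjoint X T)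
    have h2 := card_meeting T (k - 2) (Xs.filter (fun X => ¬ Disjoint X T)) (by
      intro S hS
      have hS := Finset.mem_filter.mp hS
      exact ⟨(memO (hXs hS.1)).1, hS.2⟩)
    rw [h.unif T hT, show k - 2 - 1 = k - 3 by omega] at h2
    rw [← hX1] at h1
    omega
  have hdisj : ∀ X ∈ Xs, ∃ X' ∈ Xs, Disjoint X X' := by
    intro X hX
    by_contra hcon
    push Not at hcon
    have h2 := card_meeting X (k - 2) Xs (by
      intro S hS
      exact ⟨(memO (hXs hS)).1, fun hh => hcon S hS hh.symm⟩)
    rw [(memO (hXs hX)).1, show k - 2 - 1 = k - 3 by omega] at h2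
    have : (k - 2) * n.choose (k - 3) < 2 * k ^ 2 * n.choose (k - 3) := by
      apply Nat.mul_lt_mul_of_pos_right _ hR
      have : k ≤ k ^ 2 := Nat.le_self_pow (by norm_num) k
      omega
    omega
  have hyX : ∀ X ∈ X1, y ∉ X := by
    intro X hX hy
    exact Finset.disjoint_left.mp (Finset.mem_filter.mp hX).2 hy hyT
  have hZc : (X1.image (insert y)).card = X1.card := by
    apply Finset.card_image_of_injOn
    intro X hX X' hX' he
    have e1 := Finset.erase_insert (hyX X hX)
    have e2 := Finset.erase_insert (hyX X' hX')
    rw [← e1, ← e2, he]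
  have htot := h.total (X1.image (insert y)) ∅ (by
      intro G hG
      obtain ⟨X, hX, rfl⟩ := Finset.mem_image.mp hG
      have h1 := Finset.mem_powersetCard.mp (hXs (Finset.mem_filter.mp hX).1)
      rw [Finset.mem_powersetCard, Finset.card_insert_of_notMem (hyX X hX), h1.2]
      refine ⟨?_, by omega⟩
      apply Finset.insert_subset _ h1.1
      rwa [Finset.mem_compl]) (by
      intro G hG S hS hgS
      obtain ⟨X, hX, rfl⟩ := Finset.mem_image.mp hG
      have hXX := (Finset.mem_filter.mp hX).1
      have hXT := Finset.disjoint_left.mp (Finset.mem_filter.mp hX).2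
      obtain ⟨hXc, hXA, hXB⟩ := memO (hXs hXX)
      have hXn : X.Nonempty := by rw [← Finset.card_pos]; omega
      have hsub : insert y X ⊆ S := by rw [← hgS]; exact h.gsub S hS
      have hXS : X ⊆ S := (Finset.subset_insert _ _).trans hsub
      have hyS : y ∈ S := hsub (Finset.mem_insert_self _ _)
      have hstX := hst X hXX
      have huA := hstX.1
      have hScard := h.unif S hS
      have hgc : (insert y X).card = k - 1 := by rw [← hgS]; exact h.gcard S hS
      by_cases huS : u ∈ S
      · -- S = u ∪ X ∪ y
        have hSe : insert u (insert y X) = S := by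
          apply Finset.eq_of_subset_of_card_le
          · exact Finset.insert_subset huS hsub
          · rw [Finset.card_insert_of_notMem, hgc]
            · omega
            · rw [Finset.mem_insert]
              rintro (rfl | hh)
              · exact huT hyT
              · exact hXA _ hh huA
        obtain ⟨a, ha, hau⟩ : ∃ a ∈ A, a ≠ u := by
          apply Finset.exists_mem_ne
          rw [h.unif A h.hA]; omega
        have haX : a ∉ X := fun hh => hXA _ hh ha
        have hay : a ≠ y := by rintro rfl; exact hyA ha
        refine h.bad hS (hstX.2 a ha hau) hT ?_ ?_ ?_ ?_ X hXc u a ?_ ?_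
        · intro hh
          have : y ∈ insert u (insert a X) := by rw [← hh]; exact hyS
          simp only [Finset.mem_insert] at this
          rcases this with h1 | h1 | h1
          · exact huT (h1 ▸ hyT)
          · exact hay h1.symm
          · exact hyX X hX h1
        · rintro rfl; exact huT huS
        · intro hh; apply huT; rw [← hh]; simp
        · intro z h1 h2 h3
          rw [← hSe] at h1
          simp only [Finset.mem_insert] at h1 h2
          have h4 : z ≠ u := fun hh => huT (hh ▸ h3)
          have h5 : z ∉ X := fun hh => hXT hh h3
          rcases h1 with h1 | h1 | h1
          · exact h4 h1
          · rcases h2 with h2 | h2 | h2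
            · exact h4 h2
            · exact hay (h2 ▸ h1)
            · exact h5 h2
          · exact h5 h1
        · rw [← hSe]
          intro z hz
          simp only [Finset.mem_insert, Finset.mem_union] at hz ⊢
          rcases hz with hz | rfl | hz
          · exact Or.inl hz
          · exact Or.inr (Or.inr (Or.inl hyT))
          · exact Or.inr (Or.inr (Or.inr hz))
        · intro z hz
          simp only [Finset.mem_insert, Finset.mem_union] at hz ⊢
          rcases hz with hz | hz | hz
          · exact Or.inl hz
          · exact Or.inr (Or.inl hz)
          · exact Or.inr (Or.inr (Or.inr hz))
      · obtain ⟨X', hX', hd⟩ := hdisj X hXX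
        have hX'O := memO (hXs hX')
        obtain ⟨a, ha, hau, haS⟩ : ∃ a ∈ A, a ≠ u ∧ a ∉ S := by
          by_contra hcon
          push Not at hcon
          have hsub2 : A.erase u ⊆ S \ insert y X := by
            intro z hz
            rw [Finset.mem_erase] at hz
            rw [Finset.mem_sdiff, Finset.mem_insert]
            refine ⟨hcon z hz.2 hz.1, ?_⟩
            rintro (rfl | hh)
            · exact hyA hz.2
            · exact hXA _ hh hz.2
          have h1 := Finset.card_le_card hsub2
          rw [Finset.card_erase_of_mem huA, h.unif A h.hA,
            Finset.card_sdiff_of_subset hsub, hgc, hScard] at h1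
          omega
        exact h.star_kill hstX (hst X' hX') hX'O.1 hd hXn ha hau hXA hS huS haS hXS)
      (Finset.empty_subset _) (by simp)
  rw [hZc] at htot
  have hch : (2 * k).choose 2 + k = 2 * k ^ 2 := by
    rw [Nat.choose_two_right]
    obtain ⟨m, rfl⟩ : ∃ m, k = m + 1 := ⟨k - 1, by omega⟩
    have : 2 * (m + 1) * (2 * (m + 1) - 1) / 2 = (m + 1) * (2 * m + 1) := by
      rw [show 2 * (m + 1) - 1 = 2 * m + 1 by omega]
      rw [show 2 * (m + 1) * (2 * m + 1) = 2 * ((m + 1) * (2 * m + 1)) by ring]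
      simp
    rw [this]; ring
  have : 2 * k ^ 2 * n.choose (k - 3) = (2 * k).choose 2 * n.choose (k - 3)
      + k * n.choose (k - 3) := by rw [← hch]; ring
  simp only [Finset.card_empty] at htot
  omega

theorem Cfg.caseII (h : Cfg k F g A B) {u : Fin n} (hu : u ∈ A)
    (hn : (2 * k).choose k + 3 * k ≤ n)
    (hall : ∀ T ∈ F, ¬ T ⊆ A ∪ B → u ∈ T) :
    (F.filter (fun S => ¬ S ⊆ A ∪ B)).card + 1 ≤ (n - k - 1).choose (k - 1) := by
  have hk := h.hk
  have hd := Finset.disjoint_left.mp h.hAB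
  have huB : u ∉ B := hd hu
  set Gu := (Finset.powersetCard k Bᶜ).filter (fun S => u ∈ S) with hGu
  have hBc : Bᶜ.card = n - k := by rw [Finset.card_compl, Fintype.card_fin, h.unif B h.hB]
  have hGc : Gu.card ≤ (n - k - 1).choose (k - 1) := by
    have h1 : (Gu.image (fun S => S.erase u)).card = Gu.card := by
      apply Finset.card_image_of_injOn
      intro S hS T hT hST
      have e1 := Finset.insert_erase (Finset.mem_filter.mp hS).2
      have e2 := Finset.insert_erase (Finset.mem_filter.mp hT).2
      simp only at hST
      rw [← e1, ← e2, hST]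
    have h2 : (Bᶜ.erase u).card = n - k - 1 := by
      rw [Finset.card_erase_of_mem (by simpa using huB), hBc]
    rw [← h1, ← h2, ← Finset.card_powersetCard]
    apply Finset.card_le_card
    intro T hT
    obtain ⟨S, hS, rfl⟩ := Finset.mem_image.mp hT
    have hS := Finset.mem_filter.mp hS
    have hS1 := Finset.mem_powersetCard.mp hS.1
    rw [Finset.mem_powersetCard]
    exact ⟨Finset.erase_subset_erase _ hS1.1, by rw [Finset.card_erase_of_mem hS.2, hS1.2]⟩
  set M := Gu.filter (fun S => S ∉ F) with hM
  set Bad := F.filter (fun S => ¬ S ⊆ A ∪ B ∧ ¬ Disjoint S B) with hBad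
  have hBM : Bad.card ≤ M.card := by
    have hdc : Bad.card * (2 * k).choose k ≤ M.card * (2 * k).choose k := by
      apply Finset.card_mul_le_card_mul (fun S T => S \ B ⊆ T)
      · intro S hS
        obtain ⟨hSF, hSD, hSB⟩ := Finset.mem_filter.mp hS
        have huS := hall S hSF hSD
        have hSc := h.unif S hSF
        have hcap : 1 ≤ (S ∩ B).card := by
          rw [Nat.one_le_iff_ne_zero, Finset.card_ne_zero, Finset.nonempty_iff_ne_empty]
          exact fun hh => hSB (Finset.disjoint_iff_inter_eq_empty.mpr hh)
        have hsum := Finset.card_sdiff_add_card_inter S B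
        have hQ0 : n - 2 * k ≤ (Bᶜ \ S).card := by
          have := Finset.le_card_sdiff S Bᶜ
          omega
        obtain ⟨X0, hX0, hX0c⟩ := Finset.exists_subset_card_eq
          (s := Bᶜ \ S) (n := (S ∩ B).card - 1) (by
            have := (Finset.card_le_card (Finset.inter_subset_left : S ∩ B ⊆ S))
            omega)
        have hQ : (2 * k).choose k ≤ ((Bᶜ \ S) \ X0).card := by
          have := Finset.le_card_sdiff X0 (Bᶜ \ S)
          omega
        refine hQ.trans ?_
        have hbase : ∀ x ∈ (Bᶜ \ S) \ X0, x ∉ (S \ B) ∪ X0 := by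
          intro x hx
          simp only [Finset.mem_sdiff, Finset.mem_union, Finset.mem_compl] at hx ⊢
          tauto
        have hbc : ((S \ B) ∪ X0).card = k - 1 := by
          rw [Finset.card_union_of_disjoint]
          · omega
          · rw [Finset.disjoint_left]
            intro z hz hz'
            have := hX0 hz'
            simp only [Finset.mem_sdiff, Finset.mem_compl] at hz this
            exact this.2 hz.1
        have himg : (((Bᶜ \ S) \ X0).image (fun x => insert x ((S \ B) ∪ X0))).card
            = ((Bᶜ \ S) \ X0).card := by
          apply Finset.card_image_of_injOn
          intro x hx y hy hxy
          simp only at hxy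
          have : x ∈ insert y ((S \ B) ∪ X0) := by rw [← hxy]; simp
          rcases Finset.mem_insert.mp this with hh | hh
          · exact hh
          · exact absurd hh (hbase x hx)
        rw [← himg]
        apply Finset.card_le_card
        intro T hT
        obtain ⟨x, hx, rfl⟩ := Finset.mem_image.mp hT
        have hxb := hbase x hx
        have hsubT : S \ B ⊆ insert x ((S \ B) ∪ X0) :=
          Finset.subset_union_left.trans (Finset.subset_insert _ _)
        have huT : u ∈ insert x ((S \ B) ∪ X0) :=
          hsubT (Finset.mem_sdiff.mpr ⟨huS, huB⟩)
        have hTc : (insert x ((S \ B) ∪ X0)).card = k := by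
          rw [Finset.card_insert_of_notMem hxb, hbc]; omega
        have hTB : insert x ((S \ B) ∪ X0) ⊆ Bᶜ := by
          intro z hz
          simp only [Finset.mem_insert, Finset.mem_union] at hz
          rcases hz with rfl | hz | hz
          · simp only [Finset.mem_sdiff] at hx; exact hx.1.1
          · simp only [Finset.mem_sdiff] at hz; simpa using hz.2
          · have := hX0 hz
            simp only [Finset.mem_sdiff] at this; exact this.1
        rw [Finset.mem_bipartiteAbove, hM, Finset.mem_filter, hGu, Finset.mem_filter,
          Finset.mem_powersetCard]
        refine ⟨⟨⟨⟨hTB, hTc⟩, huT⟩, ?_⟩, hsubT⟩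
        generalize insert x ((S \ B) ∪ X0) = T at hsubT huT hTc hTB
        intro hTF
        have hTd : ∀ z, z ∈ T → z ∉ B := by
          intro z hz
          simpa using hTB hz
        have h3 := h.three S hSF T hTF B h.hB (by
            rintro rfl
            exact hSB (Finset.disjoint_left.mpr hTd))
          (by rintro rfl; exact huB huS) (by rintro rfl; exact huB huT)
          (fun z _ h2 h3 => hTd z h2 h3) (T ∪ B) (by
            intro z hz
            rw [Finset.mem_union]
            by_cases hzB : z ∈ B
            · exact Or.inr hzB
            · exact Or.inl (hsubT (Finset.mem_sdiff.mpr ⟨hz, hzB⟩)))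
          Finset.subset_union_left Finset.subset_union_right
        have h4 := Finset.card_union_le T B
        have := h.unif B h.hB
        omega
      · intro T hT
        have hTG := Finset.mem_powersetCard.mp
          (Finset.mem_filter.mp (Finset.mem_filter.mp hT).1).1
        have hTB : (T ∪ B).card ≤ 2 * k := by
          have h4 := Finset.card_union_le T B
          have := h.unif B h.hB
          omega
        refine le_trans ?_ (Nat.choose_le_choose k hTB)
        rw [← Finset.card_powersetCard]
        apply Finset.card_le_card
        intro S hS
        rw [Finset.mem_bipartiteBelow] at hS
        rw [Finset.mem_powersetCard]
        refine ⟨?_, h.unif S (Finset.mem_filter.mp hS.1).1⟩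
        intro z hz
        rw [Finset.mem_union]
        by_cases hzB : z ∈ B
        · exact Or.inr hzB
        · exact Or.inl (hS.2 (Finset.mem_sdiff.mpr ⟨hz, hzB⟩))
    exact Nat.le_of_mul_le_mul_right hdc (Nat.choose_pos (by omega))
  have hAG : A ∈ Gu.filter (fun S => S ∈ F) := by
    rw [Finset.mem_filter, hGu, Finset.mem_filter, Finset.mem_powersetCard]
    refine ⟨⟨⟨?_, h.unif A h.hA⟩, hu⟩, h.hA⟩
    intro z hz
    rw [Finset.mem_compl]
    exact hd hz
  have hsplit : F.filter (fun S => ¬ S ⊆ A ∪ B) ⊆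
      Bad ∪ (Gu.filter (fun S => S ∈ F)).erase A := by
    intro S hS
    obtain ⟨hSF, hSD⟩ := Finset.mem_filter.mp hS
    rw [Finset.mem_union]
    by_cases hSB : Disjoint S B
    · right
      rw [Finset.mem_erase, Finset.mem_filter, hGu, Finset.mem_filter, Finset.mem_powersetCard]
      refine ⟨?_, ⟨⟨?_, h.unif S hSF⟩, hall S hSF hSD⟩, hSF⟩
      · rintro rfl
        exact hSD Finset.subset_union_left
      · exact Finset.subset_compl_iff_disjoint_right.mpr hSB
    · left
      exact Finset.mem_filter.mpr ⟨hSF, hSD, hSB⟩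
  have e1 := Finset.card_le_card hsplit
  have e2 := Finset.card_union_le Bad ((Gu.filter (fun S => S ∈ F)).erase A)
  have e3 := Finset.card_erase_add_one hAG
  have e4 := Finset.card_filter_add_card_filter_not (s := Gu) (fun S => S ∈ F)
  rw [← hM] at e4
  omega

end

theorem vander (n k : ℕ) (hk : 3 ≤ k) (hn : 2 * k ≤ n) :
    ∑ i ∈ Finset.Icc 1 (k - 1), (n - 2 * k).choose (k - i) * (k - 1).choose (i - 1) + 1
      = (n - k - 1).choose (k - 1) ∧
    (n - 2 * k).choose (k - 1) + (k - 1) * (n - 2 * k).choose (k - 2) ≤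
      ∑ i ∈ Finset.Icc 1 (k - 1), (n - 2 * k).choose (k - i) * (k - 1).choose (i - 1) := by
  obtain ⟨m, rfl⟩ : ∃ m, k = m + 1 := ⟨k - 1, by omega⟩
  obtain ⟨N, rfl⟩ : ∃ N, n = N + 2 * (m + 1) := ⟨n - 2 * (m + 1), by omega⟩
  have e1 : N + 2 * (m + 1) - 2 * (m + 1) = N := by omega
  have e2 : N + 2 * (m + 1) - (m + 1) - 1 = m + N := by omega
  have hs : ∑ i ∈ Finset.Icc 1 (m + 1 - 1), N.choose (m + 1 - i) * (m + 1 - 1).choose (i - 1)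
      = ∑ j ∈ Finset.range m, m.choose j * N.choose (m - j) := by
    refine Finset.sum_bij (fun i _ => i - 1) ?_ ?_ ?_ ?_
    · intro i hi; simp at hi ⊢; omega
    · intro i hi j hj; simp at hi hj ⊢; omega
    · intro j hj; simp at hj; exact ⟨j + 1, by simp; omega, by simp⟩
    · intro i hi
      simp at hi
      rw [mul_comm, show m + 1 - 1 = m by omega, show m - (i - 1) = m + 1 - i by omega]
  rw [e1, e2, hs]
  constructor
  · rw [show m + 1 - 1 = m by omega, Nat.add_choose_eq,
      Finset.Nat.sum_antidiagonal_eq_sum_range_succ_mk, Finset.sum_range_succ]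
    simp
  · obtain ⟨p, rfl⟩ : ∃ p, m = p + 2 := ⟨m - 2, by omega⟩
    rw [Finset.sum_range_succ', Finset.sum_range_succ']
    simp only [Nat.choose_zero_right, zero_add, Nat.choose_one_right, one_mul, Nat.sub_zero,
      Nat.add_sub_cancel]
    rw [show p + 2 + 1 - 2 = p + 2 - 1 by omega]
    omega

theorem choose_shift (N t m : ℕ) :
    (N + t).choose (m + 1) ≤ N.choose (m + 1) + t * (N + t).choose m := by
  induction t with
  | zero => simp
  | succ t ih =>
    have h1 : (N + (t + 1)).choose (m + 1) = (N + t).choose m + (N + t).choose (m + 1) := by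
      rw [← add_assoc, Nat.choose_succ_succ]
    have h2 : (N + t).choose m ≤ (N + (t + 1)).choose m := Nat.choose_le_choose _ (by omega)
    have h3 : t * (N + t).choose m ≤ t * (N + (t + 1)).choose m := Nat.mul_le_mul_left _ h2
    rw [h1, Nat.add_mul]
    omega

theorem central_bound (k : ℕ) (hk : 3 ≤ k) :
    (k - 2) * (2 * k ^ 2 - k + 1) + 1 ≤ (2 * k).choose k := by
  rcases Nat.eq_or_lt_of_le hk with rfl | hk
  · decide
  · induction k, hk using Nat.le_induction with
    | base => decide
    | succ k hk4 ih =>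
      have ih := ih (by omega)
      have h1 := Nat.succ_mul_centralBinom_succ k
      rw [Nat.centralBinom_eq_two_mul_choose, Nat.centralBinom_eq_two_mul_choose] at h1
      have h2 : 3 * (2 * k).choose k ≤ (2 * (k + 1)).choose (k + 1) := by
        have : (k + 1) * (3 * (2 * k).choose k) ≤ (k + 1) * (2 * (k + 1)).choose (k + 1) := by
          rw [h1]
          nlinarith [Nat.zero_le ((2 * k).choose k)]
        exact Nat.le_of_mul_le_mul_left this (by omega)
      refine le_trans ?_ h2
      refine le_trans ?_ (Nat.mul_le_mul_left 3 ih)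
      obtain ⟨j, rfl⟩ : ∃ j, k = j + 4 := ⟨k - 4, by omega⟩
      rw [show j + 4 + 1 - 2 = j + 3 by omega, show j + 4 - 2 = j + 2 by omega,
        show 2 * (j + 4 + 1) ^ 2 - (j + 4 + 1) = 2 * j ^ 2 + 19 * j + 45 by
          rw [show 2 * (j + 4 + 1) ^ 2 = 2 * j ^ 2 + 19 * j + 45 + (j + 4 + 1) by ring]; omega,
        show 2 * (j + 4) ^ 2 - (j + 4) = 2 * j ^ 2 + 15 * j + 28 by
          rw [show 2 * (j + 4) ^ 2 = 2 * j ^ 2 + 15 * j + 28 + (j + 4) by ring]; omega]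
      nlinarith [Nat.zero_le (j ^ 3), Nat.zero_le (j ^ 2)]

theorem numerics (n k : ℕ) (hk : 3 ≤ k) (hn : 3 * k * (2 * k).choose k ≤ n) :
    (2 * k).choose k + 3 * k ≤ n ∧ 0 < n.choose (k - 3) ∧
    (k - 1) * ((2 * k).choose 2 * n.choose (k - 3)) + 2 * k * (2 * k ^ 2 * n.choose (k - 3))
      < (n - 2 * k).choose (k - 2) := by
  have hc := central_bound k hk
  obtain ⟨p, rfl⟩ : ∃ p, k = p + 3 := ⟨k - 3, by omega⟩
  have hch : (2 * (p + 3)).choose 2 = (p + 3) * (2 * p + 5) := by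
    rw [Nat.choose_two_right, show 2 * (p + 3) - 1 = 2 * p + 5 by omega,
      show 2 * (p + 3) * (2 * p + 5) = 2 * ((p + 3) * (2 * p + 5)) by ring]
    simp
  rw [show p + 3 - 2 = p + 1 by omega,
    show 2 * (p + 3) ^ 2 - (p + 3) = 2 * p ^ 2 + 11 * p + 15 by
      rw [show 2 * (p + 3) ^ 2 = 2 * p ^ 2 + 11 * p + 15 + (p + 3) by ring]; omega] at hc
  set c := (2 * (p + 3)).choose (p + 3) with hcdef
  have hn1 : c + 3 * (p + 3) ≤ n := by
    refine le_trans ?_ hn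
    nlinarith [Nat.zero_le (p * c), Nat.zero_le (p ^ 3), Nat.zero_le (p ^ 2)]
  have hR : 0 < n.choose (p + 3 - 3) := Nat.choose_pos (by omega)
  refine ⟨hn1, hR, ?_⟩
  rw [show p + 3 - 3 = p by omega] at hR ⊢
  rw [show p + 3 - 2 = p + 1 by omega, show p + 3 - 1 = p + 2 by omega, hch]
  have h1 := choose_shift (n - 2 * (p + 3)) (2 * (p + 3)) p
  rw [Nat.sub_add_cancel (by omega)] at h1
  have h2 := Nat.choose_succ_right_eq n p
  obtain ⟨q, hq⟩ : ∃ q, n = p + q := ⟨n - p, by omega⟩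
  have h3 : n - p = q := by omega
  rw [h3] at h2
  set R := n.choose p
  set L := n.choose (p + 1)
  set K := (n - 2 * (p + 3)).choose (p + 1)
  set M := (p + 2) * ((p + 3) * (2 * p + 5)) + 2 * (p + 3) * (2 * (p + 3) ^ 2) + 2 * (p + 3)
    with hM
  have hq1 : (p + 1) * M < q := by
    have h4 : 3 * (p + 3) * ((p + 1) * (2 * p ^ 2 + 11 * p + 15 + 1) + 1) ≤ p + q := by
      rw [← hq]
      exact le_trans (Nat.mul_le_mul_left _ hc) hn
    have h5 : 3 * (p + 3) * ((p + 1) * (2 * p ^ 2 + 11 * p + 15 + 1) + 1)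
        = (p + 1) * M + 3 * (p + 3) := by rw [hM]; ring
    omega
  have h6 : M * R < L := by
    have : (p + 1) * (M * R) < (p + 1) * L := by
      calc (p + 1) * (M * R) = (p + 1) * M * R := by ring
        _ < q * R := Nat.mul_lt_mul_of_pos_right hq1 hR
        _ = (p + 1) * L := by rw [mul_comm q, ← h2]; ring
    exact Nat.lt_of_mul_lt_mul_left this
  have h7 : M * R = (p + 2) * ((p + 3) * (2 * p + 5) * R) + 2 * (p + 3) * (2 * (p + 3) ^ 2 * R)
      + 2 * (p + 3) * R := by rw [hM]; ring
  omega

theorem Cfg.core {n k : ℕ} {F : Finset (Finset (Fin n))}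
    {g : Finset (Fin n) → Finset (Fin n)} {A B : Finset (Fin n)}
    (h : Cfg k F g A B) {u : Fin n} (Xs : Finset (Finset (Fin n)))
    (hXs : Xs ⊆ Finset.powersetCard (k - 2) (A ∪ B)ᶜ)
    (hst : ∀ X ∈ Xs, StarAt F A u X) (hbig : 2 * k ^ 2 * n.choose (k - 3) ≤ Xs.card)
    (hR : 0 < n.choose (k - 3)) (hn : (2 * k).choose k + 3 * k ≤ n)
    (hV : (n - 2 * k).choose (k - 1) + (k - 1) * (n - 2 * k).choose (k - 2) + 1
      ≤ (n - k - 1).choose (k - 1)) :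
    (F.filter (fun S => ¬ S ⊆ A ∪ B)).card + 1 ≤ (n - k - 1).choose (k - 1) := by
  have hk := h.hk
  by_cases hT : ∃ T ∈ F, ¬ T ⊆ A ∪ B ∧ u ∉ T
  · obtain ⟨T, hT, hTD, huT⟩ := hT
    have h1 := h.caseI Xs hXs hst hbig hR hT huT hTD
    have h2 := Finset.card_filter_le F (fun S => ¬ S ⊆ A ∪ B)
    omega
  · push Not at hT
    have hpos : 0 < Xs.card := lt_of_lt_of_le (by positivity) hbig
    obtain ⟨X, hX⟩ := Finset.card_pos.mp hpos
    exact h.caseII (hst X hX).1 hn hT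

theorem Cfg.main {n k : ℕ} {F : Finset (Finset (Fin n))}
    {g : Finset (Fin n) → Finset (Fin n)} {A B : Finset (Fin n)}
    (h : Cfg k F g A B) (hnn : 3 * k * (2 * k).choose k ≤ n) :
    (F.filter (fun S => ¬ S ⊆ A ∪ B)).card + 1 ≤ (n - k - 1).choose (k - 1) := by
  classical
  have hk := h.hk
  obtain ⟨hn, hR, hnum⟩ := numerics n k hk hnn
  obtain ⟨hv1, hv2⟩ := vander n k hk (by omega)
  have hV : (n - 2 * k).choose (k - 1) + (k - 1) * (n - 2 * k).choose (k - 2) + 1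
      ≤ (n - k - 1).choose (k - 1) := by omega
  by_cases hF : F.card ≤ (n - 2 * k).choose (k - 1) + (k - 1) * (n - 2 * k).choose (k - 2)
  · have h2 := Finset.card_filter_le F (fun S => ¬ S ⊆ A ∪ B)
    omega
  set All := Finset.powersetCard (k - 2) (A ∪ B)ᶜ with hAll
  by_cases hsA : ∃ u, 2 * k ^ 2 * n.choose (k - 3) ≤ (All.filter (fun E => StarAt F A u E)).card
  · obtain ⟨u, hu⟩ := hsA
    exact h.core _ (Finset.filter_subset _ _) (fun X hX => (Finset.mem_filter.mp hX).2) hu hR hn hV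
  by_cases hsB : ∃ u, 2 * k ^ 2 * n.choose (k - 3) ≤ (All.filter (fun E => StarAt F B u E)).card
  · obtain ⟨u, hu⟩ := hsB
    have := h.swap.core (u := u) (All.filter (fun E => StarAt F B u E))
      (by rw [Finset.union_comm B A]; exact Finset.filter_subset _ _)
      (fun X hX => (Finset.mem_filter.mp hX).2) hu hR hn hV
    rwa [Finset.union_comm B A] at this
  exfalso
  push Not at hsA hsB
  set Y := All.filter (fun E => (Fib F g A B E).card ≤ k - 2) with hY
  set Os := All.filter (fun E => ∃ S ∈ F, ∃ y, y ∉ A ∧ y ∉ B ∧ y ∉ E ∧ insert y E ⊆ S ∧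
    g S ≠ insert y E) with hOs
  have hch : ∀ E, ∃ y : Fin n, E ∈ Os → ∃ S ∈ F, y ∉ A ∧ y ∉ B ∧ y ∉ E ∧ insert y E ⊆ S ∧
      g S ≠ insert y E := by
    intro E
    by_cases hE : E ∈ Os
    · obtain ⟨S, hS, y, hy⟩ := (Finset.mem_filter.mp hE).2
      exact ⟨y, fun _ => ⟨S, hS, hy⟩⟩
    · refine ⟨⟨0, by omega⟩, fun h' => absurd h' hE⟩
  choose y hy using hch
  set Z := Os.image (fun E => insert (y E) E) with hZ
  have hOsAll : Os ⊆ All := Finset.filter_subset _ _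
  have hOZ : Os.card ≤ (k - 1) * Z.card := by
    apply Finset.card_le_mul_card_image
    intro G hG
    obtain ⟨E, hE, rfl⟩ := Finset.mem_image.mp hG
    obtain ⟨S, hS, hyA, hyB, hyE, -⟩ := hy E hE
    have hEc := (memO (hOsAll hE)).1
    have hcard : (insert (y E) E).card = k - 1 := by
      rw [Finset.card_insert_of_notMem hyE, hEc]; omega
    refine le_trans (Finset.card_le_card (t := Finset.powersetCard (k - 2) (insert (y E) E)) ?_) ?_
    · intro E' hE'
      obtain ⟨hE'1, hE'2⟩ := Finset.mem_filter.mp hE'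
      rw [Finset.mem_powersetCard]
      refine ⟨?_, (memO (hOsAll hE'1)).1⟩
      rw [← hE'2]
      exact Finset.subset_insert _ _
    · rw [Finset.card_powersetCard, hcard]
      obtain ⟨m, rfl⟩ : ∃ m, k = m + 2 := ⟨k - 2, by omega⟩
      have e1 : m + 2 - 1 = m + 1 := by omega
      have e2 : m + 2 - 2 = m := by omega
      rw [e1, e2, Nat.choose_succ_self_right]
  have htot := h.total Z Y (by
      intro G hG
      obtain ⟨E, hE, rfl⟩ := Finset.mem_image.mp hG
      obtain ⟨S, hS, hyA, hyB, hyE, -⟩ := hy E hE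
      have hEc := (memO (hOsAll hE)).1
      have hE2 := (Finset.mem_powersetCard.mp (hOsAll hE)).1
      rw [Finset.mem_powersetCard]
      refine ⟨?_, ?_⟩
      · rw [Finset.insert_subset_iff]
        refine ⟨?_, hE2⟩
        simp [hyA, hyB]
      · rw [Finset.card_insert_of_notMem hyE, hEc]; omega) (by
      intro G hG T hT hgT
      obtain ⟨E, hE, rfl⟩ := Finset.mem_image.mp hG
      obtain ⟨S, hS, hyA, hyB, hyE, hsub, hne⟩ := hy E hE
      have := h.gown T hT S hS (hgT ▸ hsub)
      subst this
      exact hne hgT) (Finset.filter_subset _ _) (fun E hE => (Finset.mem_filter.mp hE).2)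
  have hsmall : Z.card + Y.card ≤ (2 * k).choose 2 * n.choose (k - 3) := by omega
  have hYO : Y.card + Os.card ≤ (k - 1) * ((2 * k).choose 2 * n.choose (k - 3)) := by
    have h1 : Y.card ≤ (k - 1) * Y.card := Nat.le_mul_of_pos_left _ (by omega)
    have h2 := Nat.mul_le_mul_left (k - 1) hsmall
    rw [mul_add] at h2
    omega
  set SA := A.biUnion (fun u => All.filter (fun E => StarAt F A u E)) with hSA
  set SB := B.biUnion (fun u => All.filter (fun E => StarAt F B u E)) with hSB
  have hSAc : SA.card ≤ A.card * (2 * k ^ 2 * n.choose (k - 3)) :=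
    Finset.card_biUnion_le_card_mul _ _ _ (fun u _ => (hsA u).le)
  have hSBc : SB.card ≤ B.card * (2 * k ^ 2 * n.choose (k - 3)) :=
    Finset.card_biUnion_le_card_mul _ _ _ (fun u _ => (hsB u).le)
  rw [h.unif A h.hA] at hSAc
  rw [h.unif B h.hB] at hSBc
  have hcov : All ⊆ (Y ∪ Os) ∪ (SA ∪ SB) := by
    intro E hE
    obtain ⟨e1, e2, e3⟩ := memO hE
    rcases (h.fib e1 e2 e3).2 with h1 | h1 | ⟨u, h1⟩ | ⟨u, h1⟩
    · exact Finset.mem_union_left _ (Finset.mem_union_left _ (Finset.mem_filter.mpr ⟨hE, h1⟩))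
    · exact Finset.mem_union_left _ (Finset.mem_union_right _ (Finset.mem_filter.mpr ⟨hE, h1⟩))
    · exact Finset.mem_union_right _ (Finset.mem_union_left _
        (Finset.mem_biUnion.mpr ⟨u, h1.1, Finset.mem_filter.mpr ⟨hE, h1⟩⟩))
    · exact Finset.mem_union_right _ (Finset.mem_union_right _
        (Finset.mem_biUnion.mpr ⟨u, h1.1, Finset.mem_filter.mpr ⟨hE, h1⟩⟩))
  have hc := Finset.card_le_card hcov
  have c1 := Finset.card_union_le (Y ∪ Os) (SA ∪ SB)
  have c2 := Finset.card_union_le Y Os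
  have c3 := Finset.card_union_le SA SB
  have hAc : All.card = (n - 2 * k).choose (k - 2) := by
    rw [hAll, Finset.card_powersetCard, h.cardO]
  have e : 2 * k * (2 * k ^ 2 * n.choose (k - 3)) =
    k * (2 * k ^ 2 * n.choose (k - 3)) + k * (2 * k ^ 2 * n.choose (k - 3)) := by ring
  omega

theorem stmt14 (n k : ℕ) (hk : 3 ≤ k) (hn : 3 * k * (2 * k).choose k ≤ n)
    (F : Finset (Finset (Fin n))) (hunif : ∀ S ∈ F, S.card = k)
    (hci : CondIntersecting 3 (2 * k) F)
    (huniq : ∀ S ∈ F, ∃ G ⊆ S, G.card = k - 1 ∧ ∀ T ∈ F, G ⊆ T → T = S)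
    (A B : Finset (Fin n)) (hA : A ∈ F) (hB : B ∈ F) (hAB : Disjoint A B) :
    (F.filter (fun S => (S ∩ (A ∪ B)).card ≤ k - 1)).card ≤ (n - k - 1).choose (k - 1) - 1 ∧
    ∑ i ∈ Finset.range k, (F.filter (fun S => (S ∩ (A ∪ B)).card = i)).card ≤
      ∑ i ∈ Finset.Icc 1 (k - 1), (n - 2 * k).choose (k - i) * (k - 1).choose (i - 1) := by
  obtain ⟨g, h⟩ := Cfg.mk' hk F hunif hci huniq A B hA hB hAB
  have hm := h.main hn
  have hsub : F.filter (fun S => (S ∩ (A ∪ B)).card ≤ k - 1) ⊆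
      F.filter (fun S => ¬ S ⊆ A ∪ B) := by
    intro S hS
    obtain ⟨h1, h2⟩ := Finset.mem_filter.mp hS
    refine Finset.mem_filter.mpr ⟨h1, fun h3 => ?_⟩
    rw [Finset.inter_eq_left.mpr h3, hunif S h1] at h2
    omega
  have hc := Finset.card_le_card hsub
  obtain ⟨hnn, -, -⟩ := numerics n k hk hn
  have hv := (vander n k hk (by omega)).1
  have hsum : ∑ i ∈ Finset.range k, (F.filter (fun S => (S ∩ (A ∪ B)).card = i)).card =
      (F.filter (fun S => (S ∩ (A ∪ B)).card ≤ k - 1)).card := by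
    rw [Finset.card_eq_sum_card_fiberwise (f := fun S => (S ∩ (A ∪ B)).card)
      (t := Finset.range k)]
    · apply Finset.sum_congr rfl
      intro i hi
      rw [Finset.mem_range] at hi
      congr 1
      ext S
      simp only [Finset.mem_filter]
      constructor
      · rintro ⟨a, b⟩; exact ⟨⟨a, by omega⟩, b⟩
      · rintro ⟨⟨a, -⟩, b⟩; exact ⟨a, b⟩
    · intro S hS
      have := (Finset.mem_filter.mp (Finset.mem_coe.mp hS)).2
      simp only [Finset.coe_range, Set.mem_Iio]
      omega
  refine ⟨by omega, ?_⟩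
  rw [hsum]
  omega
end
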